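/- (Unique continuation Carleman inequality.) There exist absolute constants C₀ ≥ 1 and C ≥ 1 such that the following holds. Let T > 0, ρ > 0 with ρ² ≥ 4000T, let 𝒞 := {(t,x) ∈ ℝ × ℝ³ : t ∈ [0,T], |x| ≤ ρ}, and let u : 𝒞 → ℝ³ be smooth (on an open neighborhood of 𝒞) obeying |Lu| ≤ (1/(C₀T))|u| + (1/(C₀T)^{1/2})|∇u| on 𝒞, where L := ∂ₜ + Δ (spatial Laplacian, componentwise). Then for any 0 < t₁ ≤ t₀ ≤ T/1000, one has ∫_{t₀}^{2t₀} ∫_{|x| ≤ ρ/2} ( T^{−1}|u|² + |∇u|² ) e^{−|x|²/(4t)} dx dt ≤ C ( e^{−ρ²/(500 t₀)} X + t₀^{3/2} (e t₀/t₁)^{C ρ²/t₀} Y ), where X := ∫_0^T ∫_{|x| ≤ ρ} ( T^{−1}|u|² + |∇u|² ) dx dt and Y := ∫_{|x| ≤ ρ} |u(0,x)|² t₁^{−3/2} e^{−|x|²/(4t₁)} dx. -/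

import Mathlib

noncomputable section

open MeasureTheory Real Set

/-- Spatial partial derivative in the `i`-th coordinate direction. -/
def pdg {d : ℕ} (i : Fin d) (f : EuclideanSpace ℝ (Fin d) → ℝ)
    (x : EuclideanSpace ℝ (Fin d)) : ℝ :=
  fderiv ℝ f x (EuclideanSpace.single i 1)

/-- Spatial Laplacian. -/
def lapg {d : ℕ} (f : EuclideanSpace ℝ (Fin d) → ℝ) (x : EuclideanSpace ℝ (Fin d)) : ℝ :=
  ∑ i, pdg i (pdg i f) x

/-- Time derivative. -/
def tdg {d : ℕ} (f : ℝ → EuclideanSpace ℝ (Fin d) → ℝ) (t : ℝ)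
    (x : EuclideanSpace ℝ (Fin d)) : ℝ :=
  deriv (fun s => f s x) t

/-- The backward heat operator `L = ∂ₜ + Δ` acting on scalar functions. -/
def bheat {d : ℕ} (f : ℝ → EuclideanSpace ℝ (Fin d) → ℝ) (t : ℝ)
    (x : EuclideanSpace ℝ (Fin d)) : ℝ :=
  tdg f t x + lapg (f t) x

/-- Three-dimensional Euclidean space. -/
abbrev E3 : Type := EuclideanSpace ℝ (Fin 3)

/-! The weight is `G = s ^ (-(d / 2 + α)) * exp (2 * α * s / S) * exp (-|x|² / (4 * s))` at the
shifted time `s = t + t₁`, with `S = 2T` and `α = ρ² / (400 t₀)`. It satisfies `∂ₜG - ΔG = F G` with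
`F = -α / s + 2 * α / S` independent of `x`. Differentiate `∫ w (|∇v|² + F v² / 2) G` in time for
`w = s (1 + s / S)`: completing a square in the term containing `L v` bounds a positive combination
of `|∇v|² G` and `v² G`, minus `w |L v|² G / 2`, by boundary terms in time.

Apply this to `v = ψ u`, where `ψ` is a spatial cutoff. Where `ψ = 1`, the hypothesis on `L u` lets
the positive terms absorb `|L v|²`. Where `ψ` varies, `|x| ≥ ρ / 2`, and the weight is smaller than
on `t₀ ≤ t ≤ 2 t₀` near the axis by a factor of order `exp (-0.8 α) = exp (-ρ² / (500 t₀))`; this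
error is part of the `X` term. The upper time is chosen in `[T / 2, T]` by averaging, where the
weight is just as small, and the lower boundary term at `t = 0` is the `Y` term.
-/

/-! ### Directional derivatives -/

section DirDeriv

variable {V : Type*} [NormedAddCommGroup V] [NormedSpace ℝ V] {a b : V} {f g : V → ℝ} {z : V}

/-- The derivative of `f` along the fixed vector `a`, as a function of the base point. -/
def dirDeriv (a : V) (f : V → ℝ) (z : V) : ℝ := fderiv ℝ f z a

lemma contDiff_dirDeriv {n : ℕ} (hf : ContDiff ℝ (n + 1) f) : ContDiff ℝ n (dirDeriv a f) :=
  (hf.fderiv_right le_rfl).clm_apply contDiff_const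

lemma continuousOn_dirDeriv {s : Set V} (hs : IsOpen s) (hf : ContDiffOn ℝ 1 f s) :
    ContinuousOn (dirDeriv a f) s :=
  (hf.continuousOn_fderiv_of_isOpen hs le_rfl).clm_apply continuousOn_const

lemma continuous_dirDeriv (hf : ContDiff ℝ 1 f) : Continuous (dirDeriv a f) :=
  (hf.continuous_fderiv one_ne_zero).clm_apply continuous_const

lemma differentiable_dirDeriv (hf : ContDiff ℝ 2 f) : Differentiable ℝ (dirDeriv a f) :=
  (contDiff_dirDeriv (n := 1) (by simpa [one_add_one_eq_two] using hf)).differentiable one_ne_zero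

lemma dirDeriv_comm (hf : ContDiff ℝ 2 f) :
    dirDeriv a (dirDeriv b f) z = dirDeriv b (dirDeriv a f) z := by
  have hdiff : DifferentiableAt ℝ (fderiv ℝ f) z :=
    (hf.fderiv_right (m := 1) (by norm_num [one_add_one_eq_two])).differentiable one_ne_zero z
  have dirDeriv_dirDeriv (c e : V) : dirDeriv c (dirDeriv e f) z = fderiv ℝ (fderiv ℝ f) z c e := by
    unfold dirDeriv
    rw [fderiv_clm_apply hdiff (differentiableAt_const e)]
    simp
  rw [dirDeriv_dirDeriv, dirDeriv_dirDeriv]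
  exact hf.contDiffAt.isSymmSndFDerivAt (by simp) a b

lemma dirDeriv_mul (hf : Differentiable ℝ f) (hg : Differentiable ℝ g) :
    dirDeriv a (fun z => f z * g z) = fun z => f z * dirDeriv a g z + g z * dirDeriv a f z := by
  ext z
  simp [dirDeriv, fderiv_fun_mul (hf z) (hg z)]

lemma dirDeriv_add (hf : Differentiable ℝ f) (hg : Differentiable ℝ g) :
    dirDeriv a (fun z => f z + g z) = fun z => dirDeriv a f z + dirDeriv a g z := by
  ext z
  simp [dirDeriv, fderiv_fun_add (hf z) (hg z)]

open Topology in
lemma dirDeriv_eventuallyEq (h : f =ᶠ[𝓝 z] g) : dirDeriv a f =ᶠ[𝓝 z] dirDeriv a g :=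
  h.fderiv.fun_comp fun L => L a

open Topology in
lemma dirDeriv_eq_zero (h : f =ᶠ[𝓝 z] 0) : dirDeriv a f z = 0 := by
  rw [(dirDeriv_eventuallyEq h).eq_of_nhds]
  simp [dirDeriv]

lemma dirDeriv_const_mul (c : ℝ) :
    dirDeriv a (fun z => c * f z) = fun z => c * dirDeriv a f z :=
  funext fun z => congrArg (fun L => L z a) (fderiv_const_smul_field (𝕜 := ℝ) (f := f) c)

lemma dirDeriv_comp_smul (c : ℝ) :
    dirDeriv a (fun z => f (c • z)) = fun z => c * dirDeriv a f (c • z) := by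
  ext z
  simp [dirDeriv, fderiv_comp_smul]

lemma periodic_dirDeriv (h : Function.Periodic f b) : Function.Periodic (dirDeriv a f) b := by
  intro z
  rw [dirDeriv, ← fderiv_comp_add_right, h.funext, dirDeriv]

lemma dirDeriv_dirDeriv_mul (hf : ContDiff ℝ 2 f) (hg : ContDiff ℝ 2 g) :
    dirDeriv a (dirDeriv a fun z => f z * g z) z = f z * dirDeriv a (dirDeriv a g) z
      + 2 * (dirDeriv a f z * dirDeriv a g z) + g z * dirDeriv a (dirDeriv a f) z := by
  have hf' := hf.differentiable two_ne_zero
  have hg' := hg.differentiable two_ne_zero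
  have hDf := differentiable_dirDeriv (a := a) hf
  have hDg := differentiable_dirDeriv (a := a) hg
  rw [dirDeriv_mul hf' hg', dirDeriv_add (hf'.fun_mul hDg) (hg'.fun_mul hDf),
    dirDeriv_mul hf' hDg, dirDeriv_mul hg' hDf]
  ring

lemma integral_dirDeriv_eq_zero [FiniteDimensional ℝ V] [MeasurableSpace V] [BorelSpace V]
    {μ : Measure V} [μ.IsAddHaarMeasure] (hf : ContDiff ℝ 1 f) (hsupp : HasCompactSupport f) :
    ∫ x, dirDeriv a f x ∂μ = 0 := by
  have hintegrable : Integrable (dirDeriv a f) μ :=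
    (continuous_dirDeriv hf).integrable_of_hasCompactSupport (hsupp.fderiv_apply (𝕜 := ℝ) a)
  simpa [dirDeriv] using integral_mul_fderiv_eq_neg_fderiv_mul_of_integrable (μ := μ) (v := a)
    (f := fun _ => (1 : ℝ)) (by simp) (by simpa using! hintegrable)
    (by simpa using hf.continuous.integrable_of_hasCompactSupport hsupp)
    (fun x _ => differentiableAt_const 1) (fun x _ => hf.differentiable one_ne_zero x)

end DirDeriv

/-! ### Calculus on space-time -/

/-- Space-time with the time variable first. -/
abbrev Spacetime (d : ℕ) : Type := ℝ × EuclideanSpace ℝ (Fin d)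

section SpacetimeCalculus

variable {d : ℕ} {f g v : Spacetime d → ℝ} {z : Spacetime d}

/-- The partial derivative in time of a function on space-time. -/
abbrev timeDeriv (f : Spacetime d → ℝ) : Spacetime d → ℝ := dirDeriv (1, 0) f

/-- The `i`-th spatial partial derivative of a function on space-time. -/
abbrev spaceDeriv (i : Fin d) (f : Spacetime d → ℝ) : Spacetime d → ℝ :=
  dirDeriv (0, EuclideanSpace.single i 1) f

/-- The squared length of the spatial gradient. -/
def gradSq (f : Spacetime d → ℝ) (z : Spacetime d) : ℝ := ∑ i, spaceDeriv i f z ^ 2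

/-- The Laplacian in the space variables. -/
def spaceLaplacian (f : Spacetime d → ℝ) (z : Spacetime d) : ℝ :=
  ∑ i, spaceDeriv i (spaceDeriv i f) z

/-- The backward heat operator `∂ₜ + Δ` for functions on space-time; see `bheat_eq_heatOp`. -/
def heatOp (f : Spacetime d → ℝ) (z : Spacetime d) : ℝ := timeDeriv f z + spaceLaplacian f z

lemma gradSq_nonneg : 0 ≤ gradSq f z := Finset.sum_nonneg fun _ _ => sq_nonneg _

lemma contDiff_one_spaceDeriv (hf : ContDiff ℝ 2 f) (i : Fin d) :
    ContDiff ℝ 1 (spaceDeriv i f) :=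
  contDiff_dirDeriv (n := 1) (by simpa [one_add_one_eq_two] using hf)

lemma continuous_gradSq (hf : ContDiff ℝ 1 f) : Continuous (gradSq f) :=
  continuous_finsetSum _ fun _ _ => (continuous_dirDeriv hf).pow 2

lemma continuous_heatOp (hf : ContDiff ℝ 2 f) : Continuous (heatOp f) :=
  (continuous_dirDeriv (hf.of_le one_le_two)).add <|
    continuous_finsetSum _ fun i _ => continuous_dirDeriv (contDiff_one_spaceDeriv hf i)

lemma hasDerivAt_timeLine (hf : DifferentiableAt ℝ f z) :
    HasDerivAt (fun s => f (s, z.2)) (timeDeriv f z) z.1 :=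
  hf.hasFDerivAt.comp_hasDerivAt z.1 ((hasDerivAt_id z.1).prodMk (hasDerivAt_const z.1 z.2))

lemma hasFDerivAt_slice {t : ℝ} {x : EuclideanSpace ℝ (Fin d)} (hf : DifferentiableAt ℝ f (t, x)) :
    HasFDerivAt (fun y => f (t, y))
      ((fderiv ℝ f (t, x)).comp (ContinuousLinearMap.inr ℝ ℝ (EuclideanSpace ℝ (Fin d)))) x :=
  hf.hasFDerivAt.comp x (hasFDerivAt_prodMk_right t x)

lemma pdg_slice {i : Fin d} {t : ℝ} {x : EuclideanSpace ℝ (Fin d)}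
    (hf : DifferentiableAt ℝ f (t, x)) :
    pdg i (fun y => f (t, y)) x = spaceDeriv i f (t, x) := by
  rw [pdg, (hasFDerivAt_slice hf).fderiv]
  rfl

lemma bheat_eq_heatOp (hf : ContDiff ℝ 2 f) (t : ℝ) (x : EuclideanSpace ℝ (Fin d)) :
    bheat (fun s y => f (s, y)) t x = heatOp f (t, x) := by
  have hdiff := hf.differentiable two_ne_zero
  have hpdg (i : Fin d) : pdg i (fun y => f (t, y)) = fun y => spaceDeriv i f (t, y) :=
    funext fun y => pdg_slice (hdiff (t, y))
  simp only [bheat, tdg, lapg, heatOp, spaceLaplacian, hpdg]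
  congr 1
  · exact (hasDerivAt_timeLine (hdiff (t, x))).deriv
  · exact Finset.sum_congr rfl fun i _ => pdg_slice (differentiable_dirDeriv hf _)

lemma gradSq_comp_smul (c : ℝ) : gradSq (fun z => f (c • z)) z = c ^ 2 * gradSq f (c • z) := by
  simp only [gradSq, spaceDeriv, dirDeriv_comp_smul, mul_pow, Finset.mul_sum]

lemma spaceLaplacian_comp_smul (c : ℝ) :
    spaceLaplacian (fun z => f (c • z)) z = c ^ 2 * spaceLaplacian f (c • z) := by
  simp only [spaceLaplacian, spaceDeriv, dirDeriv_comp_smul, dirDeriv_const_mul, ← mul_assoc,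
    ← sq, Finset.mul_sum]

lemma periodic_gradSq {c : Spacetime d} (h : Function.Periodic f c) :
    Function.Periodic (gradSq f) c := fun z =>
  Finset.sum_congr rfl fun _ _ => congrArg (· ^ 2) (periodic_dirDeriv h z)

lemma periodic_spaceLaplacian {c : Spacetime d} (h : Function.Periodic f c) :
    Function.Periodic (spaceLaplacian f) c := fun z =>
  Finset.sum_congr rfl fun _ _ => periodic_dirDeriv (periodic_dirDeriv h) z

lemma gradSq_mul_le (hf : Differentiable ℝ f) (hg : Differentiable ℝ g) :
    gradSq (fun z => f z * g z) z ≤ 2 * (f z ^ 2 * gradSq g z + g z ^ 2 * gradSq f z) := by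
  simp only [gradSq, Finset.mul_sum, ← Finset.sum_add_distrib]
  refine Finset.sum_le_sum fun i _ => ?_
  rw [spaceDeriv, dirDeriv_mul hf hg]
  nlinarith [sq_nonneg (f z * spaceDeriv i g z - g z * spaceDeriv i f z)]

lemma heatOp_mul (hf : ContDiff ℝ 2 f) (hg : ContDiff ℝ 2 g) :
    heatOp (fun z => f z * g z) z =
      f z * heatOp g z + 2 * ∑ i, spaceDeriv i f z * spaceDeriv i g z + g z * heatOp f z := by
  have hlaplacian : spaceLaplacian (fun z => f z * g z) z = f z * spaceLaplacian g z
      + 2 * ∑ i, spaceDeriv i f z * spaceDeriv i g z + g z * spaceLaplacian f z := by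
    simp only [spaceLaplacian, Finset.mul_sum, ← Finset.sum_add_distrib]
    exact Finset.sum_congr rfl fun i _ => dirDeriv_dirDeriv_mul hf hg
  rw [heatOp, hlaplacian, timeDeriv,
    dirDeriv_mul (hf.differentiable two_ne_zero) (hg.differentiable two_ne_zero), heatOp, heatOp]
  ring

lemma heatOp_mul_sq_le (hf : ContDiff ℝ 2 f) (hg : ContDiff ℝ 2 g) :
    heatOp (fun z => f z * g z) z ^ 2 ≤ 3 * (f z ^ 2 * heatOp g z ^ 2)
      + 12 * (gradSq f z * gradSq g z) + 3 * (g z ^ 2 * heatOp f z ^ 2) := by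
  have hcs : (∑ i, spaceDeriv i f z * spaceDeriv i g z) ^ 2 ≤ gradSq f z * gradSq g z :=
    Finset.sum_mul_sq_le_sq_mul_sq _ _ _
  rw [heatOp_mul hf hg]
  set b := ∑ i, spaceDeriv i f z * spaceDeriv i g z
  nlinarith [sq_nonneg (f z * heatOp g z - 2 * b), sq_nonneg (f z * heatOp g z - g z * heatOp f z),
    sq_nonneg (2 * b - g z * heatOp f z)]

open Topology in
lemma gradSq_congr (h : f =ᶠ[𝓝 z] g) : gradSq f z = gradSq g z :=
  Finset.sum_congr rfl fun _ _ => congrArg (· ^ 2) (dirDeriv_eventuallyEq h).eq_of_nhds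

open Topology in
lemma heatOp_congr (h : f =ᶠ[𝓝 z] g) : heatOp f z = heatOp g z :=
  congrArg₂ (· + ·) (dirDeriv_eventuallyEq h).eq_of_nhds <| Finset.sum_congr rfl fun _ _ =>
    (dirDeriv_eventuallyEq (dirDeriv_eventuallyEq h)).eq_of_nhds

end SpacetimeCalculus

/-! ### The Carleman identity -/

section CarlemanIdentity

variable {d : ℕ} {α S t₁ s t : ℝ} {x : EuclideanSpace ℝ (Fin d)} {v : Spacetime d → ℝ}
  {z : Spacetime d} {i : Fin d}

lemma hasDerivAt_spaceLine {f : Spacetime d → ℝ} (hf : DifferentiableAt ℝ f (t, x)) :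
    HasDerivAt (fun τ : ℝ => f (t, x + τ • EuclideanSpace.single i 1)) (spaceDeriv i f (t, x)) 0 :=
  (hasFDerivAt_slice hf).hasLineDerivAt (EuclideanSpace.single i 1)

/-- The factor of the Carleman weight depending on time only. The power `s ^ (-d / 2)` belongs to
the heat kernel, the other two factors make `carlemanPotential` increase from large negative
values. -/
def carlemanAmplitude (d : ℕ) (α S s : ℝ) : ℝ := s ^ (-(d / 2 + α)) * exp (2 * α * s / S)

/-- The Carleman weight `G`: a Gaussian of variance proportional to the shifted time
`s = t + t₁`. -/
def carlemanWeight (α S t₁ : ℝ) (z : Spacetime d) : ℝ :=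
  carlemanAmplitude d α S (z.1 + t₁) * exp (-‖z.2‖ ^ 2 / (4 * (z.1 + t₁)))

/-- The quotient `F = (∂ₜG - ΔG) / G`, which depends on the shifted time `s` only. -/
def carlemanPotential (α S s : ℝ) : ℝ := -α / s + 2 * α / S

/-- The time multiplier `w(s) = s (1 + s / S)`, chosen so that both `w' - w / s` and `(w F)'` are
positive. -/
def carlemanMultiplier (S s : ℝ) : ℝ := s * (1 + s / S)

/-- The unweighted energy density `|∇v|² + F v² / 2` of the energy method. -/
def carlemanEnergy (α S t₁ : ℝ) (v : Spacetime d → ℝ) (z : Spacetime d) : ℝ :=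
  gradSq v z + carlemanPotential α S (z.1 + t₁) / 2 * v z ^ 2

/-- The weighted energy density whose time derivative is computed in `carleman_identity`. -/
def carlemanDensity (α S t₁ : ℝ) (v : Spacetime d → ℝ) (z : Spacetime d) : ℝ :=
  carlemanMultiplier S (z.1 + t₁) * carlemanEnergy α S t₁ v z * carlemanWeight α S t₁ z

/-- The radial derivative `x · ∇v`. -/
def radialDeriv (v : Spacetime d → ℝ) (z : Spacetime d) : ℝ := ∑ j, z.2 j * spaceDeriv j v z

/-- The first-order operator `2 ∂ₜv + x · ∇v / s + F v` paired with `Δv` in the energy method. -/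
def carlemanVelocity (α S t₁ : ℝ) (v : Spacetime d → ℝ) (z : Spacetime d) : ℝ :=
  2 * timeDeriv v z + radialDeriv v z / (z.1 + t₁) + carlemanPotential α S (z.1 + t₁) * v z

/-- The `i`-th component of the spatial flux that balances `carlemanDensity` in
`carleman_identity`. -/
def carlemanFlux (α S t₁ : ℝ) (v : Spacetime d → ℝ) (i : Fin d) (z : Spacetime d) : ℝ :=
  carlemanMultiplier S (z.1 + t₁) *
    (carlemanVelocity α S t₁ v z * spaceDeriv i v z
      - carlemanEnergy α S t₁ v z * z.2 i / (2 * (z.1 + t₁))) *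
    carlemanWeight α S t₁ z

/-- The integrand controlled by boundary terms in the Carleman inequality: the positive terms left
by the energy method minus the part of `|L v|²` lost in completing the square. -/
def carlemanIntegrand (α S t₁ : ℝ) (v : Spacetime d → ℝ) (z : Spacetime d) : ℝ :=
  ((z.1 + t₁) / S * gradSq v z + α * (1 + 4 * (z.1 + t₁) / S) / (2 * S) * v z ^ 2
    - carlemanMultiplier S (z.1 + t₁) / 2 * heatOp v z ^ 2) * carlemanWeight α S t₁ z

/-- The spatial part `Δv - x · ∇v / (2s) - F v / 2` of `L v`, in the sense that
`L v = carlemanVelocity / 2 + carlemanSpatialPart`. -/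
def carlemanSpatialPart (α S t₁ : ℝ) (v : Spacetime d → ℝ) (z : Spacetime d) : ℝ :=
  spaceLaplacian v z - radialDeriv v z / (2 * (z.1 + t₁))
    - carlemanPotential α S (z.1 + t₁) / 2 * v z

lemma carlemanAmplitude_pos (hs : 0 < s) : 0 < carlemanAmplitude d α S s := by
  unfold carlemanAmplitude
  positivity

lemma carlemanWeight_pos (hs : 0 < z.1 + t₁) : 0 < carlemanWeight α S t₁ z :=
  mul_pos (carlemanAmplitude_pos hs) (exp_pos _)

lemma carlemanMultiplier_pos (hS : 0 < S) (hs : 0 < s) : 0 < carlemanMultiplier S s := by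
  unfold carlemanMultiplier
  positivity

lemma hasDerivAt_carlemanAmplitude (hs : 0 < s) :
    HasDerivAt (carlemanAmplitude d α S)
      ((-(d / 2 + α) / s + 2 * α / S) * carlemanAmplitude d α S s) s := by
  have hrpow := hasDerivAt_rpow_const (x := s) (p := -(d / 2 + α)) (Or.inl hs.ne')
  have hexp := (((hasDerivAt_id s).const_mul (2 * α)).div_const S).exp
  refine (hrpow.mul hexp).congr_deriv ?_
  simp only [carlemanAmplitude, rpow_sub_one hs.ne', id]
  ring

lemma hasDerivAt_carlemanPotential (hs : s ≠ 0) :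
    HasDerivAt (carlemanPotential α S) (α / s ^ 2) s := by
  refine (((hasDerivAt_inv hs).const_mul (-α)).add_const (2 * α / S)).congr_deriv ?_
  ring

lemma hasDerivAt_carlemanMultiplier :
    HasDerivAt (carlemanMultiplier S) (1 + 2 * s / S) s := by
  refine ((hasDerivAt_id s).mul (((hasDerivAt_id s).div_const S).const_add 1)).congr_deriv ?_
  simp only [id]
  ring

lemma hasDerivAt_carlemanWeight_time (hs : 0 < t + t₁) :
    HasDerivAt (fun t => carlemanWeight α S t₁ (t, x))
      ((‖x‖ ^ 2 / (4 * (t + t₁) ^ 2) - d / (2 * (t + t₁)) + carlemanPotential α S (t + t₁))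
        * carlemanWeight α S t₁ (t, x)) t := by
  have hs' : HasDerivAt (fun t => t + t₁) 1 t := (hasDerivAt_id t).add_const t₁
  have hA := (hasDerivAt_carlemanAmplitude (d := d) (α := α) (S := S) hs).comp_add_const t t₁
  have hexp := ((hasDerivAt_const t (-‖x‖ ^ 2)).fun_div (hs'.const_mul 4) (by positivity)).exp
  refine (hA.mul hexp).congr_deriv ?_
  simp only [carlemanWeight, carlemanPotential]
  field_simp
  ring

lemma hasDerivAt_carlemanWeight_space (hs : 0 < t + t₁) :
    HasDerivAt (fun τ : ℝ => carlemanWeight α S t₁ (t, x + τ • EuclideanSpace.single i 1))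
      (-(x i / (2 * (t + t₁))) * carlemanWeight α S t₁ (t, x)) 0 := by
  have hline : HasDerivAt (fun τ : ℝ => x + τ • EuclideanSpace.single i (1 : ℝ))
      (EuclideanSpace.single i 1) 0 := by
    simpa using ((hasDerivAt_id (0 : ℝ)).smul_const (EuclideanSpace.single i (1 : ℝ))).const_add x
  have hexp := (hline.norm_sq.neg.div_const (4 * (t + t₁))).exp
  refine (hexp.const_mul (carlemanAmplitude d α S (t + t₁))).congr_deriv ?_
  simp [carlemanWeight, EuclideanSpace.inner_single_right]
  field_simp
  ring

lemma hasDerivAt_carlemanEnergy_time (hv : ContDiff ℝ 2 v) (hs : t + t₁ ≠ 0) :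
    HasDerivAt (fun t => carlemanEnergy α S t₁ v (t, x))
      (2 * ∑ i, spaceDeriv i v (t, x) * spaceDeriv i (timeDeriv v) (t, x)
        + α / (t + t₁) ^ 2 / 2 * v (t, x) ^ 2
        + carlemanPotential α S (t + t₁) * v (t, x) * timeDeriv v (t, x)) t := by
  have hgrad : HasDerivAt (fun t => gradSq v (t, x))
      (∑ i, 2 * spaceDeriv i v (t, x) * spaceDeriv i (timeDeriv v) (t, x)) t :=
    HasDerivAt.fun_sum fun i _ => by
      simpa [dirDeriv_comm hv] using
        (hasDerivAt_timeLine (z := (t, x)) (differentiable_dirDeriv hv _)).fun_pow 2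
  have hF := (hasDerivAt_carlemanPotential (α := α) (S := S) hs).comp_add_const t t₁
  have hvt := (hasDerivAt_timeLine (z := (t, x)) (hv.differentiable two_ne_zero _)).pow 2
  refine (hgrad.add ((hF.div_const 2).mul hvt)).congr_deriv ?_
  simp only [mul_assoc, ← Finset.mul_sum]
  simp
  ring

lemma hasDerivAt_carlemanEnergy_space (hv : ContDiff ℝ 2 v) :
    HasDerivAt (fun τ : ℝ => carlemanEnergy α S t₁ v (t, x + τ • EuclideanSpace.single i 1))
      (2 * ∑ j, spaceDeriv j v (t, x) * spaceDeriv i (spaceDeriv j v) (t, x)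
        + carlemanPotential α S (t + t₁) * v (t, x) * spaceDeriv i v (t, x)) 0 := by
  have hgrad : HasDerivAt (fun τ : ℝ => gradSq v (t, x + τ • EuclideanSpace.single i 1))
      (∑ j, 2 * spaceDeriv j v (t, x) * spaceDeriv i (spaceDeriv j v) (t, x)) 0 :=
    HasDerivAt.fun_sum fun j _ => by
      simpa using (hasDerivAt_spaceLine (i := i) (differentiable_dirDeriv hv (t, x))).fun_pow 2
  have hvi := (hasDerivAt_spaceLine (i := i) (hv.differentiable two_ne_zero (t, x))).pow 2
  refine (hgrad.add (hvi.const_mul (carlemanPotential α S (t + t₁) / 2))).congr_deriv ?_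
  simp only [mul_assoc, ← Finset.mul_sum]
  simp
  ring

lemma hasDerivAt_coord (i j : Fin d) :
    HasDerivAt (fun τ : ℝ => (x + τ • EuclideanSpace.single i (1 : ℝ)) j)
      (if j = i then 1 else 0) 0 := by
  simpa using ((hasDerivAt_id (0 : ℝ)).mul_const (if j = i then (1 : ℝ) else 0)).const_add (x j)

lemma hasDerivAt_radialDeriv_space (hv : ContDiff ℝ 2 v) :
    HasDerivAt (fun τ : ℝ => radialDeriv v (t, x + τ • EuclideanSpace.single i 1))
      (spaceDeriv i v (t, x) + ∑ j, x j * spaceDeriv i (spaceDeriv j v) (t, x)) 0 := by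
  have hterm (j : Fin d) := (hasDerivAt_coord (x := x) i j).mul
    (hasDerivAt_spaceLine (i := i) (differentiable_dirDeriv (a := (0, EuclideanSpace.single j 1))
      hv (t, x)))
  refine (HasDerivAt.fun_sum (u := Finset.univ) fun j _ => hterm j).congr_deriv ?_
  simp [Finset.sum_add_distrib]

lemma hasDerivAt_carlemanVelocity_space (hv : ContDiff ℝ 2 v) :
    HasDerivAt (fun τ : ℝ => carlemanVelocity α S t₁ v (t, x + τ • EuclideanSpace.single i 1))
      (2 * spaceDeriv i (timeDeriv v) (t, x)
        + (spaceDeriv i v (t, x) + ∑ j, x j * spaceDeriv i (spaceDeriv j v) (t, x)) / (t + t₁)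
        + carlemanPotential α S (t + t₁) * spaceDeriv i v (t, x)) 0 := by
  have hvt := (hasDerivAt_spaceLine (i := i)
    (differentiable_dirDeriv (a := (1, 0)) hv (t, x))).const_mul 2
  have hvx := (hasDerivAt_radialDeriv_space (i := i) (t := t) (x := x) hv).div_const (t + t₁)
  have hv0 := (hasDerivAt_spaceLine (i := i) (hv.differentiable two_ne_zero (t, x))).const_mul
    (carlemanPotential α S (t + t₁))
  exact (hvt.add hvx).add hv0

/-- The open half-space of positive shifted time, where the Carleman weight is smooth. -/
def shiftedFuture (d : ℕ) (t₁ : ℝ) : Set (Spacetime d) := {z | 0 < z.1 + t₁}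

lemma isOpen_shiftedFuture : IsOpen (shiftedFuture d t₁) :=
  isOpen_lt continuous_const (by fun_prop)

lemma contDiffOn_comp_shiftedTime {φ : ℝ → ℝ} (hφ : ContDiffOn ℝ 1 φ (Ioi 0)) :
    ContDiffOn ℝ 1 (fun z : Spacetime d => φ (z.1 + t₁)) (shiftedFuture d t₁) :=
  hφ.comp (by fun_prop) fun _ hz => hz

lemma contDiffOn_carlemanPotential : ContDiffOn ℝ 1 (carlemanPotential α S) (Ioi 0) :=
  (contDiffOn_const.div contDiffOn_id fun _ hs => (mem_Ioi.1 hs).ne').add contDiffOn_const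

lemma contDiffOn_carlemanWeight : ContDiffOn ℝ 1 (carlemanWeight α S t₁) (shiftedFuture d t₁) := by
  have hamp : ContDiffOn ℝ 1 (carlemanAmplitude d α S) (Ioi 0) :=
    (contDiffOn_id.rpow_const_of_ne fun _ hs => (mem_Ioi.1 hs).ne').mul (by fun_prop)
  refine (contDiffOn_comp_shiftedTime hamp).mul (ContDiffOn.exp (ContDiffOn.div ?_ ?_ ?_))
  · exact (contDiff_snd.norm_sq ℝ).neg.contDiffOn
  · fun_prop
  · exact fun z hz => (mul_pos four_pos hz).ne'

lemma contDiff_radialDeriv (hv : ContDiff ℝ 2 v) : ContDiff ℝ 1 (radialDeriv v) :=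
  ContDiff.sum fun j _ => by
    have := contDiff_one_spaceDeriv hv j
    fun_prop

lemma contDiffOn_carlemanEnergy (hv : ContDiff ℝ 2 v) :
    ContDiffOn ℝ 1 (carlemanEnergy α S t₁ v) (shiftedFuture d t₁) := by
  have hgrad : ContDiff ℝ 1 (gradSq v) :=
    ContDiff.sum fun i _ => (contDiff_one_spaceDeriv hv i).pow 2
  exact hgrad.contDiffOn.add
    (((contDiffOn_comp_shiftedTime contDiffOn_carlemanPotential).div_const 2).mul
      ((hv.of_le one_le_two).pow 2).contDiffOn)

lemma contDiffOn_carlemanMultiplier : ContDiffOn ℝ 1 (carlemanMultiplier S) (Ioi 0) := by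
  unfold carlemanMultiplier
  fun_prop

lemma contDiffOn_carlemanDensity (hv : ContDiff ℝ 2 v) :
    ContDiffOn ℝ 1 (carlemanDensity α S t₁ v) (shiftedFuture d t₁) :=
  ((contDiffOn_comp_shiftedTime contDiffOn_carlemanMultiplier).mul
    (contDiffOn_carlemanEnergy hv)).mul contDiffOn_carlemanWeight

lemma contDiffOn_carlemanVelocity (hv : ContDiff ℝ 2 v) :
    ContDiffOn ℝ 1 (carlemanVelocity α S t₁ v) (shiftedFuture d t₁) := by
  have htime : ContDiff ℝ 1 (timeDeriv v) :=
    contDiff_dirDeriv (n := 1) (by simpa [one_add_one_eq_two] using hv)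
  exact ((contDiff_const.mul htime).contDiffOn.add
    ((contDiff_radialDeriv hv).contDiffOn.div (by fun_prop) fun z hz => ne_of_gt hz)).add
    ((contDiffOn_comp_shiftedTime contDiffOn_carlemanPotential).mul
      (hv.of_le one_le_two).contDiffOn)

lemma contDiffOn_carlemanFlux (hv : ContDiff ℝ 2 v) :
    ContDiffOn ℝ 1 (carlemanFlux α S t₁ v i) (shiftedFuture d t₁) := by
  refine ((contDiffOn_comp_shiftedTime contDiffOn_carlemanMultiplier).mul
    (((contDiffOn_carlemanVelocity hv).mul (contDiff_one_spaceDeriv hv i).contDiffOn).sub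
      (((contDiffOn_carlemanEnergy hv).mul ?_).div ?_ ?_))).mul contDiffOn_carlemanWeight
  · fun_prop
  · fun_prop
  · exact fun z hz => (mul_pos two_pos hz).ne'

lemma timeDeriv_carlemanDensity (hv : ContDiff ℝ 2 v) (hz : z ∈ shiftedFuture d t₁) :
    timeDeriv (carlemanDensity α S t₁ v) z =
      ((1 + 2 * (z.1 + t₁) / S) * carlemanEnergy α S t₁ v z
        + carlemanMultiplier S (z.1 + t₁) *
          (2 * ∑ i, spaceDeriv i v z * spaceDeriv i (timeDeriv v) z
            + α / (z.1 + t₁) ^ 2 / 2 * v z ^ 2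
            + carlemanPotential α S (z.1 + t₁) * v z * timeDeriv v z
            + carlemanEnergy α S t₁ v z *
              (‖z.2‖ ^ 2 / (4 * (z.1 + t₁) ^ 2) - d / (2 * (z.1 + t₁))
                + carlemanPotential α S (z.1 + t₁)))) * carlemanWeight α S t₁ z := by
  obtain ⟨t, x⟩ := z
  have hs : 0 < t + t₁ := hz
  have hdiff : DifferentiableAt ℝ (carlemanDensity α S t₁ v) (t, x) :=
    ((contDiffOn_carlemanDensity hv).contDiffAt (isOpen_shiftedFuture.mem_nhds hz)).differentiableAt
      one_ne_zero
  have hw := (hasDerivAt_carlemanMultiplier (S := S) (s := t + t₁)).comp_add_const t t₁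
  rw [(hasDerivAt_timeLine hdiff).unique ((hw.fun_mul (hasDerivAt_carlemanEnergy_time hv
    hs.ne')).fun_mul (hasDerivAt_carlemanWeight_time hs))]
  ring

lemma spaceDeriv_carlemanFlux (hv : ContDiff ℝ 2 v) (hz : z ∈ shiftedFuture d t₁) :
    spaceDeriv i (carlemanFlux α S t₁ v i) z =
      carlemanMultiplier S (z.1 + t₁) *
        ((2 * spaceDeriv i (timeDeriv v) z
            + (spaceDeriv i v z + ∑ j, z.2 j * spaceDeriv i (spaceDeriv j v) z) / (z.1 + t₁)
            + carlemanPotential α S (z.1 + t₁) * spaceDeriv i v z) * spaceDeriv i v z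
          + carlemanVelocity α S t₁ v z *
            (spaceDeriv i (spaceDeriv i v) z - z.2 i * spaceDeriv i v z / (2 * (z.1 + t₁)))
          - (2 * (∑ j, spaceDeriv j v z * spaceDeriv i (spaceDeriv j v) z)
            + carlemanPotential α S (z.1 + t₁) * v z * spaceDeriv i v z) * z.2 i / (2 * (z.1 + t₁))
          + carlemanEnergy α S t₁ v z *
            (z.2 i ^ 2 / (4 * (z.1 + t₁) ^ 2) - 1 / (2 * (z.1 + t₁)))) *
        carlemanWeight α S t₁ z := by
  obtain ⟨t, x⟩ := z
  have hs : 0 < t + t₁ := hz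
  have hdiff : DifferentiableAt ℝ (carlemanFlux α S t₁ v i) (t, x) :=
    ((contDiffOn_carlemanFlux hv).contDiffAt (isOpen_shiftedFuture.mem_nhds hz)).differentiableAt
      one_ne_zero
  have hx : HasDerivAt (fun τ : ℝ => (x + τ • EuclideanSpace.single i (1 : ℝ)) i) 1 0 := by
    simpa using hasDerivAt_coord (x := x) i i
  have hV := hasDerivAt_carlemanVelocity_space (α := α) (S := S) (t₁ := t₁) (t := t) (x := x)
    (i := i) hv
  have hE := hasDerivAt_carlemanEnergy_space (α := α) (S := S) (t₁ := t₁) (t := t) (x := x)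
    (i := i) hv
  have hG := hasDerivAt_carlemanWeight_space (α := α) (S := S) (x := x) (i := i) hs
  have hvi := hasDerivAt_spaceLine (i := i)
    (differentiable_dirDeriv (a := (0, EuclideanSpace.single i 1)) hv (t, x))
  have hflux := (((hV.fun_mul hvi).fun_sub ((hE.fun_mul hx).div_const (2 * (t + t₁)))).const_mul
    (carlemanMultiplier S (t + t₁))).fun_mul hG
  rw [(hasDerivAt_spaceLine hdiff).unique hflux]
  simp only [zero_smul, add_zero]
  field_simp
  ring

lemma divergence_carlemanFlux (hv : ContDiff ℝ 2 v) (hz : z ∈ shiftedFuture d t₁) :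
    ∑ i, spaceDeriv i (carlemanFlux α S t₁ v i) z =
      carlemanMultiplier S (z.1 + t₁) *
        (2 * ∑ i, spaceDeriv i v z * spaceDeriv i (timeDeriv v) z
          + (1 / (z.1 + t₁) + carlemanPotential α S (z.1 + t₁)) * gradSq v z
          + carlemanVelocity α S t₁ v z *
            (spaceLaplacian v z - radialDeriv v z / (2 * (z.1 + t₁)))
          - carlemanPotential α S (z.1 + t₁) * v z * radialDeriv v z / (2 * (z.1 + t₁))
          + carlemanEnergy α S t₁ v z *
            (‖z.2‖ ^ 2 / (4 * (z.1 + t₁) ^ 2) - d / (2 * (z.1 + t₁)))) *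
        carlemanWeight α S t₁ z := by
  have hessian_symm : ∑ i, (∑ j, spaceDeriv j v z * spaceDeriv i (spaceDeriv j v) z) * z.2 i
      = ∑ i, (∑ j, z.2 j * spaceDeriv i (spaceDeriv j v) z) * spaceDeriv i v z := by
    simp only [Finset.sum_mul]
    rw [Finset.sum_comm]
    refine Finset.sum_congr rfl fun i _ => Finset.sum_congr rfl fun j _ => ?_
    rw [show spaceDeriv j (spaceDeriv i v) z = spaceDeriv i (spaceDeriv j v) z from
      dirDeriv_comm hv]
    ring
  simp only [spaceDeriv_carlemanFlux hv hz, ← Finset.sum_mul, ← Finset.mul_sum]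
  congr 2
  calc
    _ = ∑ i, (2 * (spaceDeriv i v z * spaceDeriv i (timeDeriv v) z)
          + (1 / (z.1 + t₁) + carlemanPotential α S (z.1 + t₁)) * spaceDeriv i v z ^ 2
          + carlemanVelocity α S t₁ v z * (spaceDeriv i (spaceDeriv i v) z
            - z.2 i * spaceDeriv i v z / (2 * (z.1 + t₁)))
          - carlemanPotential α S (z.1 + t₁) * v z * (z.2 i * spaceDeriv i v z)
            / (2 * (z.1 + t₁))
          + carlemanEnergy α S t₁ v z * (z.2 i ^ 2 / (4 * (z.1 + t₁) ^ 2) - 1 / (2 * (z.1 + t₁)))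
          + ((∑ j, z.2 j * spaceDeriv i (spaceDeriv j v) z) * spaceDeriv i v z
            - (∑ j, spaceDeriv j v z * spaceDeriv i (spaceDeriv j v) z) * z.2 i)
            / (z.1 + t₁)) :=
      Finset.sum_congr rfl fun i _ => by field_simp; ring
    _ = _ := by
      simp only [Finset.sum_add_distrib, Finset.sum_sub_distrib, ← Finset.mul_sum,
        ← Finset.sum_div, hessian_symm, gradSq, spaceLaplacian, radialDeriv,
        EuclideanSpace.real_norm_sq_eq]
      simp

theorem carleman_identity (hS : S ≠ 0) (hv : ContDiff ℝ 2 v) (hz : z ∈ shiftedFuture d t₁) :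
    timeDeriv (carlemanDensity α S t₁ v) z - ∑ i, spaceDeriv i (carlemanFlux α S t₁ v i) z =
      carlemanIntegrand α S t₁ v z
        + 2 * carlemanMultiplier S (z.1 + t₁)
          * (carlemanSpatialPart α S t₁ v z - heatOp v z / 2) ^ 2 * carlemanWeight α S t₁ z := by
  have hs : z.1 + t₁ ≠ 0 := ne_of_gt hz
  rw [timeDeriv_carlemanDensity hv hz, divergence_carlemanFlux hv hz]
  simp only [carlemanIntegrand, carlemanSpatialPart, carlemanVelocity, carlemanEnergy, heatOp,
    carlemanMultiplier, carlemanPotential]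
  field_simp
  ring

end CarlemanIdentity

/-! ### Integration over cylinders -/

section Integration

open Metric

variable {d : ℕ} {f : Spacetime d → ℝ} {Ω : Set (Spacetime d)}
  {K : Set (EuclideanSpace ℝ (Fin d))} {a b ρ t : ℝ} {i : Fin d}

lemma setIntegral_timeDeriv (hΩ : IsOpen Ω) (hf : ContDiffOn ℝ 1 f Ω) (hK : IsCompact K)
    (hab : a ≤ b) (hsub : Icc a b ×ˢ K ⊆ Ω) :
    ∫ z in Icc a b ×ˢ K, timeDeriv f z = (∫ x in K, f (b, x)) - ∫ x in K, f (a, x) := by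
  have hcont : ContinuousOn (timeDeriv f) (Icc a b ×ˢ K) :=
    (continuousOn_dirDeriv hΩ hf).mono hsub
  have hslice {t : ℝ} (ht : t ∈ Icc a b) : IntegrableOn (fun x => f (t, x)) K :=
    (hf.continuousOn.comp (by fun_prop) fun _ hx => hsub ⟨ht, hx⟩).integrableOn_compact hK
  have hintegrable : IntegrableOn (timeDeriv f) (Icc a b ×ˢ K) :=
    hcont.integrableOn_compact (isCompact_Icc.prod hK)
  rw [Measure.volume_eq_prod] at hintegrable ⊢
  rw [setIntegral_prod _ hintegrable, ← integral_sub (hslice (right_mem_Icc.2 hab))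
    (hslice (left_mem_Icc.2 hab))]
  rw [IntegrableOn, ← Measure.prod_restrict] at hintegrable
  rw [integral_integral_swap (f := fun t x => timeDeriv f (t, x)) hintegrable]
  refine setIntegral_congr_fun hK.measurableSet fun x hx => ?_
  rw [integral_Icc_eq_integral_Ioc, ← intervalIntegral.integral_of_le hab]
  refine intervalIntegral.integral_eq_sub_of_hasDerivAt
    (f := fun t => f (t, x)) (f' := fun t => timeDeriv f (t, x)) (fun t ht => ?_) ?_
  · have hz : (t, x) ∈ Ω := hsub ⟨uIcc_of_le hab ▸ ht, hx⟩
    exact hasDerivAt_timeLine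
      ((hf.contDiffAt (hΩ.mem_nhds hz)).differentiableAt one_ne_zero)
  · refine ContinuousOn.intervalIntegrable ?_
    rw [uIcc_of_le hab]
    exact hcont.comp (by fun_prop) fun t ht => ⟨ht, hx⟩

lemma integral_spaceDeriv_slice (hΩ : IsOpen Ω) (hf : ContDiffOn ℝ 1 f Ω)
    (hsub : ∀ x, (t, x) ∈ Ω) (hvanish : ∀ x, ρ < ‖x‖ → f (t, x) = 0) :
    ∫ x in closedBall 0 ρ, spaceDeriv i f (t, x) = 0 := by
  have hslice (x : EuclideanSpace ℝ (Fin d)) :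
      dirDeriv (EuclideanSpace.single i 1) (fun y => f (t, y)) x = spaceDeriv i f (t, x) :=
    pdg_slice ((hf.contDiffAt (hΩ.mem_nhds (hsub x))).differentiableAt one_ne_zero)
  have hcontDiff : ContDiff ℝ 1 fun y => f (t, y) :=
    contDiffOn_univ.1 (hf.comp (by fun_prop) fun x _ => hsub x)
  have hsupp : HasCompactSupport fun y => f (t, y) :=
    HasCompactSupport.intro (isCompact_closedBall 0 ρ) fun x hx => hvanish x (by simpa using hx)
  rw [setIntegral_eq_integral_of_forall_compl_eq_zero fun x hx => ?_]
  · simpa only [← hslice] using integral_dirDeriv_eq_zero (μ := volume) hcontDiff hsupp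
  · have hzero : (fun y => f (t, y)) =ᶠ[nhds x] 0 := by
      filter_upwards [isClosed_closedBall.isOpen_compl.mem_nhds hx] with y hy
      exact hvanish y (by simpa using hy)
    rw [← hslice, dirDeriv_eq_zero hzero]

lemma setIntegral_spaceDeriv_eq_zero (hΩ : IsOpen Ω) (hf : ContDiffOn ℝ 1 f Ω)
    (hsub : Icc a b ×ˢ univ ⊆ Ω) (hvanish : ∀ z : Spacetime d, ρ < ‖z.2‖ → f z = 0) :
    ∫ z in Icc a b ×ˢ closedBall 0 ρ, spaceDeriv i f z = 0 := by
  have hintegrable : IntegrableOn (spaceDeriv i f) (Icc a b ×ˢ closedBall 0 ρ) :=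
    ((continuousOn_dirDeriv hΩ hf).mono ((prod_mono_right (subset_univ _)).trans
      hsub)).integrableOn_compact (isCompact_Icc.prod (isCompact_closedBall 0 ρ))
  rw [Measure.volume_eq_prod] at hintegrable ⊢
  rw [setIntegral_prod _ hintegrable]
  exact setIntegral_eq_zero_of_forall_eq_zero fun t ht =>
    integral_spaceDeriv_slice hΩ hf (fun x => hsub ⟨ht, mem_univ x⟩) fun x => hvanish (t, x)

end Integration

section CarlemanIntegration

open Metric

variable {d : ℕ} {α S t₁ T ρ : ℝ} {v : Spacetime d → ℝ} {z : Spacetime d} {i : Fin d}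

lemma continuousOn_carlemanIntegrand (hv : ContDiff ℝ 2 v) :
    ContinuousOn (carlemanIntegrand α S t₁ v) (shiftedFuture d t₁) := by
  have hgrad := continuous_gradSq (hv.of_le one_le_two)
  have hheat := continuous_heatOp hv
  have hcont := hv.continuous
  have hmul : ContinuousOn (fun z : Spacetime d => carlemanMultiplier S (z.1 + t₁))
      (shiftedFuture d t₁) :=
    (contDiffOn_comp_shiftedTime contDiffOn_carlemanMultiplier).continuousOn
  exact ContinuousOn.mul (by fun_prop) contDiffOn_carlemanWeight.continuousOn

open Topology in
lemma carlemanFlux_eq_zero (h : v =ᶠ[𝓝 z] 0) : carlemanFlux α S t₁ v i z = 0 := by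
  have hderiv (j : Fin d) : spaceDeriv j v z = 0 := dirDeriv_eq_zero h
  simp [carlemanFlux, carlemanEnergy, gradSq, hderiv, h.eq_of_nhds]

lemma Icc_prod_subset_shiftedFuture (ht₁ : 0 < t₁) {K : Set (EuclideanSpace ℝ (Fin d))} :
    Icc 0 T ×ˢ K ⊆ shiftedFuture d t₁ :=
  fun _ hz => add_pos_of_nonneg_of_pos hz.1.1 ht₁

theorem setIntegral_carlemanIntegrand_le (hS : 0 < S) (ht₁ : 0 < t₁) (hT : 0 ≤ T)
    (hv : ContDiff ℝ 2 v) (hvanish : ∀ z : Spacetime d, ρ < ‖z.2‖ → v z = 0) :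
    ∫ z in Icc 0 T ×ˢ closedBall 0 ρ, carlemanIntegrand α S t₁ v z ≤
      (∫ x in closedBall 0 ρ, carlemanDensity α S t₁ v (T, x))
        - ∫ x in closedBall 0 ρ, carlemanDensity α S t₁ v (0, x) := by
  set Q : Set (Spacetime d) := Icc 0 T ×ˢ closedBall 0 ρ
  have hQ : IsCompact Q := isCompact_Icc.prod (isCompact_closedBall 0 ρ)
  have hQ_sub : Q ⊆ shiftedFuture d t₁ := Icc_prod_subset_shiftedFuture ht₁
  have hflux_zero (i : Fin d) (z : Spacetime d) (hz : ρ < ‖z.2‖) :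
      carlemanFlux α S t₁ v i z = 0 := by
    refine carlemanFlux_eq_zero ?_
    filter_upwards [continuous_snd.norm.continuousAt.eventually (lt_mem_nhds hz)] with y hy
    exact hvanish y hy
  have hint_time : IntegrableOn (timeDeriv (carlemanDensity α S t₁ v)) Q :=
    ((continuousOn_dirDeriv isOpen_shiftedFuture (contDiffOn_carlemanDensity hv)).mono
      hQ_sub).integrableOn_compact hQ
  have hint_flux (i : Fin d) : IntegrableOn (spaceDeriv i (carlemanFlux α S t₁ v i)) Q :=
    ((continuousOn_dirDeriv isOpen_shiftedFuture (contDiffOn_carlemanFlux hv)).mono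
      hQ_sub).integrableOn_compact hQ
  have hint_div := integrable_finsetSum Finset.univ fun i _ => hint_flux i
  calc
    _ ≤ ∫ z in Q, (timeDeriv (carlemanDensity α S t₁ v) z
          - ∑ i, spaceDeriv i (carlemanFlux α S t₁ v i) z) := by
      refine setIntegral_mono_on
        (((continuousOn_carlemanIntegrand hv).mono hQ_sub).integrableOn_compact hQ)
        (hint_time.sub hint_div) hQ.measurableSet fun z hz => ?_
      have hs := hQ_sub hz
      rw [carleman_identity hS.ne' hv hs]
      have hw := carlemanMultiplier_pos hS hs
      have hG := carlemanWeight_pos (α := α) (S := S) hs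
      exact le_add_of_nonneg_right (by positivity)
    _ = ∫ z in Q, timeDeriv (carlemanDensity α S t₁ v) z := by
      rw [integral_sub hint_time hint_div, integral_finsetSum _ fun i _ => hint_flux i,
        Finset.sum_eq_zero fun i _ => setIntegral_spaceDeriv_eq_zero isOpen_shiftedFuture
          (contDiffOn_carlemanFlux hv) (Icc_prod_subset_shiftedFuture ht₁) (hflux_zero i),
        sub_zero]
    _ = _ := setIntegral_timeDeriv isOpen_shiftedFuture (contDiffOn_carlemanDensity hv)
      (isCompact_closedBall 0 ρ) hT hQ_sub

end CarlemanIntegration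

/-! ### Extensions and cutoffs -/

open Topology Filter Manifold in
lemma exists_contDiff_eventuallyEq {V W : Type*} [NormedAddCommGroup V] [NormedSpace ℝ V]
    [FiniteDimensional ℝ V] [NormedAddCommGroup W] [NormedSpace ℝ W] {n : ℕ∞} {K U : Set V}
    {f : V → W} (hK : IsClosed K) (hU : IsOpen U) (hKU : K ⊆ U) (hf : ContDiffOn ℝ n f U) :
    ∃ F : V → W, ContDiff ℝ n F ∧ ∀ z ∈ K, F =ᶠ[𝓝 z] f := by
  obtain ⟨χ, hχ_zero, hχ_one, -⟩ := exists_contMDiffMap_zero_one_nhds_of_isClosed 𝓘(ℝ, V)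
    (n := n) hU.isClosed_compl hK (disjoint_compl_left_iff_subset.2 hKU)
  refine ⟨fun z => χ z • f z, contDiff_iff_contDiffAt.2 fun z => ?_, fun z hz => ?_⟩
  · by_cases hz : z ∈ U
    · exact χ.contMDiff.contDiff.contDiffAt.smul (hf.contDiffAt (hU.mem_nhds hz))
    · refine (contDiffAt_const (c := (0 : W))).congr_of_eventuallyEq ?_
      filter_upwards [eventually_nhdsSet_iff_forall.1 hχ_zero z hz] with y hy
      simp [hy]
  · filter_upwards [eventually_nhdsSet_iff_forall.1 hχ_one z hz] with y hy
    simp [hy]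

section Cutoff

open Metric Topology

variable {d : ℕ} {M ρ T : ℝ} {χ ψ f : Spacetime d → ℝ} {z : Spacetime d}

/-- A time-independent cutoff function for the ball of radius `ρ`, equal to one on the ball of
radius `ρ / 2`. The constant `M` bounds its derivatives in a scale-invariant way. -/
structure IsSpatialCutoff (M ρ : ℝ) (ψ : Spacetime d → ℝ) : Prop where
  contDiff : ContDiff ℝ 2 ψ
  timeDeriv_eq_zero (z : Spacetime d) : timeDeriv ψ z = 0
  sq_le_one (z : Spacetime d) : ψ z ^ 2 ≤ 1
  eventuallyEq_one (z : Spacetime d) (hz : ‖z.2‖ ≤ ρ / 2) : ψ =ᶠ[𝓝 z] 1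
  eq_zero (z : Spacetime d) (hz : ρ < ‖z.2‖) : ψ z = 0
  gradSq_le (z : Spacetime d) : gradSq ψ z ≤ M / ρ ^ 2
  spaceLaplacian_sq_le (z : Spacetime d) : spaceLaplacian ψ z ^ 2 ≤ M / ρ ^ 4

lemma IsSpatialCutoff.rescale (hχ : IsSpatialCutoff M 1 χ) (hρ : 0 < ρ) :
    IsSpatialCutoff M ρ fun z => χ (ρ⁻¹ • z) := by
  have hnorm (z : Spacetime d) : ‖(ρ⁻¹ • z).2‖ = ‖z.2‖ / ρ := by
    rw [Prod.smul_snd, norm_smul, norm_inv, norm_of_nonneg hρ.le, inv_mul_eq_div]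
  refine ⟨hχ.contDiff.comp (contDiff_const_smul _), fun z => ?_, fun z => hχ.sq_le_one _,
    fun z hz => ?_, fun z hz => hχ.eq_zero _ ?_, fun z => ?_, fun z => ?_⟩
  · rw [timeDeriv, dirDeriv_comp_smul]
    simp only [hχ.timeDeriv_eq_zero, mul_zero]
  · refine (continuous_const_smul ρ⁻¹).continuousAt.eventually (hχ.eventuallyEq_one (ρ⁻¹ • z) ?_)
    rw [hnorm, div_le_iff₀ hρ]
    linarith
  · rwa [hnorm, one_lt_div hρ]
  · have h := hχ.gradSq_le (ρ⁻¹ • z)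
    rw [gradSq_comp_smul, inv_pow, inv_mul_eq_div]
    gcongr
    simpa using h
  · have h := hχ.spaceLaplacian_sq_le (ρ⁻¹ • z)
    rw [spaceLaplacian_comp_smul, mul_pow, ← pow_mul, inv_pow, inv_mul_eq_div]
    gcongr
    simpa using h

lemma exists_le_of_periodic_of_support {N : Spacetime d → ℝ} (hN : Continuous N)
    (hperiodic : ∀ t : ℝ, Function.Periodic N (t, 0)) (hzero : ∀ z, ρ < ‖z.2‖ → N z = 0) :
    ∃ M, 1 ≤ M ∧ ∀ z, N z ≤ M := by
  have hball : IsCompact (closedBall (0 : EuclideanSpace ℝ (Fin d)) ρ) := isCompact_closedBall 0 ρ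
  obtain ⟨C, hC⟩ := hball.exists_bound_of_continuousOn (f := fun x => N (0, x)) (by fun_prop)
  refine ⟨max C 1, le_max_right _ _, fun ⟨t, x⟩ => ?_⟩
  by_cases hx : ‖x‖ ≤ ρ
  · have hshift : N (t, x) = N (0, x) := by simpa using hperiodic t (0, x)
    exact hshift ▸ (le_abs_self _).trans ((hC x (by simpa using hx)).trans (le_max_left _ _))
  · exact (hzero (t, x) (not_le.1 hx)).trans_le (zero_le_one.trans (le_max_right _ _))

lemma exists_unit_isSpatialCutoff (d : ℕ) :
    ∃ M, 1 ≤ M ∧ ∃ χ : Spacetime d → ℝ, IsSpatialCutoff M 1 χ := by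
  let β : ContDiffBump (0 : EuclideanSpace ℝ (Fin d)) := ⟨5 / 8, 3 / 4, by norm_num, by norm_num⟩
  let χ : Spacetime d → ℝ := fun z => β z.2
  have hχ : ContDiff ℝ 2 χ := β.contDiff.comp contDiff_snd
  have hperiodic (t : ℝ) : Function.Periodic χ (t, 0) := fun z => by simp [χ]
  have hzero (z : Spacetime d) (hz : 3 / 4 < ‖z.2‖) : χ =ᶠ[𝓝 z] 0 := by
    filter_upwards [continuous_snd.norm.continuousAt.eventually (lt_mem_nhds hz)] with y hy
    exact β.zero_of_le_dist (by simpa using hy.le)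
  obtain ⟨M₁, hM₁, hgrad⟩ := exists_le_of_periodic_of_support (ρ := 3 / 4)
    (continuous_gradSq (hχ.of_le one_le_two)) (fun t => periodic_gradSq (hperiodic t))
    fun z hz => by simp [gradSq, dirDeriv_eq_zero (hzero z hz)]
  obtain ⟨M₂, -, hlaplacian⟩ := exists_le_of_periodic_of_support (ρ := 3 / 4)
    (N := fun z => spaceLaplacian χ z ^ 2)
    ((continuous_finsetSum _ fun i _ => continuous_dirDeriv (contDiff_one_spaceDeriv hχ i)).pow 2)
    (fun t z => congrArg (· ^ 2) (periodic_spaceLaplacian (hperiodic t) z))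
    fun z hz => by
      have (i : Fin d) : spaceDeriv i (spaceDeriv i χ) z = 0 := dirDeriv_eq_zero <|
        (dirDeriv_eventuallyEq (hzero z hz)).trans (.of_eq (by ext; simp [dirDeriv]))
      simp [spaceLaplacian, this]
  refine ⟨max M₁ M₂, hM₁.trans (le_max_left _ _), χ, hχ, fun z => ?_, fun z => ?_, fun z hz => ?_,
    fun z hz => (hzero z (by linarith)).eq_of_nhds, fun z => ?_, fun z => ?_⟩
  · exact (hasDerivAt_timeLine (hχ.differentiable two_ne_zero z)).unique
      (hasDerivAt_const z.1 (χ z))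
  · exact pow_le_one₀ β.nonneg β.le_one
  · have hz' : ‖z.2‖ < 5 / 8 := by linarith
    filter_upwards [continuous_snd.norm.continuousAt.eventually (gt_mem_nhds hz')] with y hy
    exact β.one_of_mem_closedBall (by simpa using hy.le)
  · simpa using Or.inl (hgrad z)
  · simpa using Or.inr (hlaplacian z)

lemma exists_isSpatialCutoff (d : ℕ) :
    ∃ M, 1 ≤ M ∧ ∀ ρ > 0, ∃ ψ : Spacetime d → ℝ, IsSpatialCutoff M ρ ψ := by
  obtain ⟨M, hM, χ, hχ⟩ := exists_unit_isSpatialCutoff d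
  exact ⟨M, hM, fun ρ hρ => ⟨_, hχ.rescale hρ⟩⟩

namespace IsSpatialCutoff

lemma heatOp_eq (hψ : IsSpatialCutoff M ρ ψ) : heatOp ψ z = spaceLaplacian ψ z := by
  rw [heatOp, hψ.timeDeriv_eq_zero, zero_add]

lemma mul_eventuallyEq (hψ : IsSpatialCutoff M ρ ψ) (hz : ‖z.2‖ ≤ ρ / 2) :
    (fun z => ψ z * f z) =ᶠ[𝓝 z] f := by
  filter_upwards [hψ.eventuallyEq_one z hz] with y hy
  rw [hy, Pi.one_apply, one_mul]

lemma mul_sq_le (hψ : IsSpatialCutoff M ρ ψ) : (ψ z * f z) ^ 2 ≤ f z ^ 2 := by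
  rw [mul_pow]
  exact mul_le_of_le_one_left (sq_nonneg _) (hψ.sq_le_one z)

lemma gradSq_mul_le (hψ : IsSpatialCutoff M ρ ψ) (hf : Differentiable ℝ f) :
    gradSq (fun z => ψ z * f z) z ≤ 2 * gradSq f z + 2 * (M / ρ ^ 2) * f z ^ 2 := by
  have h := _root_.gradSq_mul_le (z := z) (hψ.contDiff.differentiable two_ne_zero) hf
  have h₁ := mul_le_of_le_one_left (gradSq_nonneg (f := f) (z := z)) (hψ.sq_le_one z)
  have h₂ := mul_le_mul_of_nonneg_left (hψ.gradSq_le z) (sq_nonneg (f z))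
  linarith

lemma heatOp_mul_sq_le (hψ : IsSpatialCutoff M ρ ψ) (hf : ContDiff ℝ 2 f) :
    heatOp (fun z => ψ z * f z) z ^ 2 ≤
      3 * heatOp f z ^ 2 + 12 * (M / ρ ^ 2) * gradSq f z + 3 * (M / ρ ^ 4) * f z ^ 2 := by
  have h := _root_.heatOp_mul_sq_le (z := z) hψ.contDiff hf
  rw [hψ.heatOp_eq] at h
  have h₁ := mul_le_of_le_one_left (sq_nonneg (heatOp f z)) (hψ.sq_le_one z)
  have h₂ := mul_le_mul_of_nonneg_right (hψ.gradSq_le z) (gradSq_nonneg (f := f) (z := z))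
  have h₃ := mul_le_mul_of_nonneg_left (hψ.spaceLaplacian_sq_le z) (sq_nonneg (f z))
  linarith

end IsSpatialCutoff

end Cutoff

/-! ### Estimates for the weight -/

section WeightEstimates

variable {d : ℕ} {T ρ α t₀ t₁ r s x y a c : ℝ}

/-- The relations between the scales of the Carleman inequality; the weight is used with the
exponent `α = ρ² / (400 t₀)` and the parameter `S = 2T`. -/
structure CarlemanScales (T ρ α t₀ t₁ : ℝ) : Prop where
  radius_pos : 0 < ρ
  t₁_pos : 0 < t₁
  t₁_le : t₁ ≤ t₀
  t₀_le : t₀ ≤ T / 1000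
  time_le : 4000 * T ≤ ρ ^ 2
  radius_sq : ρ ^ 2 = 400 * α * t₀

namespace CarlemanScales

lemma t₀_pos (h : CarlemanScales T ρ α t₀ t₁) : 0 < t₀ := h.t₁_pos.trans_le h.t₁_le

lemma time_pos (h : CarlemanScales T ρ α t₀ t₁) : 0 < T := by linarith [h.t₀_pos, h.t₀_le]

lemma time_div_le (h : CarlemanScales T ρ α t₀ t₁) : T / t₀ ≤ α / 10 := by
  rw [div_le_iff₀ h.t₀_pos]
  linarith [h.time_le, h.radius_sq]

lemma le_exponent (h : CarlemanScales T ρ α t₀ t₁) : 10000 ≤ α := by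
  have : 1000 ≤ T / t₀ := by
    rw [le_div_iff₀ h.t₀_pos]
    linarith [h.t₀_le]
  linarith [h.time_div_le]

lemma exponent_pos (h : CarlemanScales T ρ α t₀ t₁) : 0 < α := by linarith [h.le_exponent]

lemma shiftedTime_pos (h : CarlemanScales T ρ α t₀ t₁) (hx : 0 ≤ x) : 0 < x + t₁ :=
  add_pos_of_nonneg_of_pos hx h.t₁_pos

lemma shiftedTime_le (h : CarlemanScales T ρ α t₀ t₁) (hx : x ≤ T) : x + t₁ ≤ 1.001 * T := by
  linarith [h.t₁_le, h.t₀_le]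

lemma exponent_mul_div_le (h : CarlemanScales T ρ α t₀ t₁) (hs : s ≤ 1.001 * T) :
    2 * α * s / (2 * T) ≤ 1.001 * α := by
  have hT := h.time_pos
  rw [div_le_iff₀ (by positivity)]
  linarith [mul_le_mul_of_nonneg_left hs h.exponent_pos.le]

end CarlemanScales

/-- The size `r ^ (-d / 2 - α)`, with `r = 3 t₀`, of the weight on the time interval
`[t₀, 2 t₀]`. -/
def referenceWeight (d : ℕ) (α t₀ : ℝ) : ℝ := (3 * t₀) ^ (-(d / 2 + α))

lemma referenceWeight_pos (ht₀ : 0 < t₀) : 0 < referenceWeight d α t₀ := by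
  unfold referenceWeight
  positivity

lemma carlemanAmplitude_eq (ht₀ : 0 < t₀) (hs : 0 < s) {S : ℝ} :
    carlemanAmplitude d α S s =
      referenceWeight d α t₀ * (3 * t₀ / s) ^ (d / 2 + α) * exp (2 * α * s / S) := by
  have hr : (0 : ℝ) < 3 * t₀ := by positivity
  rw [carlemanAmplitude, referenceWeight, div_rpow hr.le hs.le, rpow_neg hr.le, rpow_neg hs.le]
  field_simp

lemma rpow_le_exp_mul (hx : 0 ≤ x) (ha : 0 ≤ a) (h : x ≤ exp c) : x ^ a ≤ exp (c * a) := by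
  rw [exp_mul]
  exact rpow_le_rpow hx h ha

lemma exp_two_lt_eight : exp 2 < 8 := by
  have hpow : exp 2 = exp 1 ^ 2 := by rw [← exp_nat_mul]; norm_num
  nlinarith [exp_one_lt_d9, exp_pos 1]

lemma self_le_exp_eight_mul_sub_three : y ≤ exp (8 * y - 3) := by
  have hadd : exp (8 * y - 1) = exp (8 * y - 3) * exp 2 := by
    rw [← exp_add]
    ring_nf
  nlinarith [add_one_le_exp (8 * y - 1), exp_two_lt_eight, exp_pos (8 * y - 3)]

lemma rpow_half_le_factorial_mul_exp (hy : 0 ≤ y) :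
    y ^ ((d : ℝ) / 2) ≤ d.factorial * exp (1 + y) :=
  calc y ^ ((d : ℝ) / 2) ≤ (1 + y) ^ ((d : ℝ) / 2) := by gcongr; linarith
    _ ≤ (1 + y) ^ (d : ℝ) :=
        rpow_le_rpow_of_exponent_le (by linarith) (half_le_self d.cast_nonneg)
    _ = (1 + y) ^ d := rpow_natCast _ _
    _ ≤ d.factorial * exp (1 + y) := by
        rw [mul_comm, ← div_le_iff₀ (by positivity)]
        exact pow_div_factorial_le_exp _ (by positivity) d

/-- A bound for `s` times the weight outside the ball of radius `ρ / 2`. -/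
def farBound (d : ℕ) (α t₀ : ℝ) : ℝ :=
  d.factorial * (3 * t₀) * referenceWeight d α t₀ * exp (-(0.8 * α))

lemma farBound_nonneg (ht₀ : 0 ≤ t₀) : 0 ≤ farBound d α t₀ := by
  unfold farBound referenceWeight
  positivity

lemma mul_carlemanAmplitude_mul_exp_le (h : CarlemanScales T ρ α t₀ t₁) (hs : 0 < s)
    (hsT : s ≤ 1.001 * T) :
    s * (carlemanAmplitude d α (2 * T) s * exp (-(25 * α * t₀ / s))) ≤ farBound d α t₀ := by
  have ht₀ := h.t₀_pos
  have hα := h.le_exponent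
  have hR : 0 < referenceWeight d α t₀ := referenceWeight_pos ht₀
  have hamp := carlemanAmplitude_eq (d := d) (α := α) ht₀ hs (S := 2 * T)
  obtain ⟨y, hy⟩ : ∃ y, y = 3 * t₀ / s := ⟨_, rfl⟩
  have hypos : 0 < y := hy ▸ by positivity
  have hsy : s * y = 3 * t₀ := by rw [hy]; field_simp
  have hexponent : 25 * α * t₀ / s = 25 / 3 * α * y := by rw [hy]; ring
  have hd : (0 : ℝ) ≤ d / 2 := by positivity
  have hsplit : y ^ (d / 2 + α) = y * (y ^ ((d : ℝ) / 2) * y ^ (α - 1)) := by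
    rw [← rpow_add hypos, ← rpow_one_add' hypos.le (by linarith)]
    ring_nf
  have hpow : y ^ (α - 1) ≤ exp ((8 * y - 3) * (α - 1)) :=
    rpow_le_exp_mul hypos.le (by linarith) self_le_exp_eight_mul_sub_three
  calc s * (carlemanAmplitude d α (2 * T) s * exp (-(25 * α * t₀ / s)))
      = 3 * t₀ * referenceWeight d α t₀ * (y ^ ((d : ℝ) / 2) * y ^ (α - 1) *
          exp (2 * α * s / (2 * T)) * exp (-(25 / 3 * α * y))) := by
        rw [hamp, ← hy, hsplit, hexponent, ← hsy]
        ring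
    _ ≤ 3 * t₀ * referenceWeight d α t₀ * (d.factorial * exp (1 + y) *
          exp ((8 * y - 3) * (α - 1)) * exp (1.001 * α) * exp (-(25 / 3 * α * y))) := by
        gcongr
        · exact rpow_half_le_factorial_mul_exp hypos.le
        · exact h.exponent_mul_div_le hsT
    _ = d.factorial * (3 * t₀) * referenceWeight d α t₀ *
          exp (1 + y + (8 * y - 3) * (α - 1) + 1.001 * α + -(25 / 3 * α * y)) := by
        simp only [exp_add]
        ring
    _ ≤ farBound d α t₀ := by
        unfold farBound
        gcongr
        nlinarith

lemma exp_five_lt : exp 5 < 1000 / 6 := by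
  have hpow : exp 5 = exp 1 ^ 5 := by rw [← exp_nat_mul]; norm_num
  calc exp 5 = exp 1 ^ 5 := hpow
    _ ≤ 2.7182818286 ^ 5 := by gcongr; exact exp_one_lt_d9.le
    _ < 1000 / 6 := by norm_num

lemma three_mul_div_rpow_le_of_half_le (h : CarlemanScales T ρ α t₀ t₁) (hs : T / 2 ≤ s) :
    (3 * t₀ / s) ^ (d / 2 + α) ≤ 6 * (t₀ / T) * exp (-5 * (α - 1)) := by
  have ht₀ := h.t₀_pos
  have hT := h.time_pos
  have hα := h.le_exponent
  obtain ⟨y, hy⟩ : ∃ y, y = 3 * t₀ / s := ⟨_, rfl⟩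
  have hypos : 0 < y := hy ▸ div_pos (by positivity) (by linarith)
  have hyle : y ≤ 6 * (t₀ / T) := by
    calc y ≤ 3 * t₀ / (T / 2) := hy ▸ by gcongr
      _ = 6 * (t₀ / T) := by field_simp; norm_num
  have hysmall : y ≤ 6 / 1000 := by
    have : t₀ / T ≤ 1 / 1000 := (div_le_iff₀ hT).2 (by linarith [h.t₀_le])
    linarith
  have hyexp : y ≤ exp (-5) := by
    rw [exp_neg]
    refine hysmall.trans ((le_inv_comm₀ (by norm_num) (exp_pos 5)).2 ?_)
    linarith [exp_five_lt]
  calc (3 * t₀ / s) ^ (d / 2 + α) = y ^ ((d : ℝ) / 2) * (y * y ^ (α - 1)) := by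
        rw [← hy, ← rpow_one_add' hypos.le (by linarith), ← rpow_add hypos]
        ring_nf
    _ ≤ 1 * (6 * (t₀ / T) * exp (-5 * (α - 1))) := by
        gcongr
        · exact rpow_le_one hypos.le (by linarith) (by positivity)
        · exact rpow_le_exp_mul hypos.le (by linarith) hyexp
    _ = 6 * (t₀ / T) * exp (-5 * (α - 1)) := one_mul _

lemma mul_carlemanAmplitude_le_of_half_le (h : CarlemanScales T ρ α t₀ t₁) (hs : T / 2 ≤ s)
    (hsT : s ≤ 1.001 * T) :
    α * carlemanAmplitude d α (2 * T) s
      ≤ 6 * (t₀ / T) * (referenceWeight d α t₀ * exp (-(0.8 * α))) := by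
  have ht₀ := h.t₀_pos
  have hT := h.time_pos
  have hα := h.le_exponent
  have hs₀ : 0 < s := by linarith
  have hR : 0 < referenceWeight d α t₀ := referenceWeight_pos ht₀
  calc α * carlemanAmplitude d α (2 * T) s
      ≤ exp α * (referenceWeight d α t₀ * (6 * (t₀ / T) * exp (-5 * (α - 1))) *
          exp (1.001 * α)) := by
        rw [carlemanAmplitude_eq ht₀ hs₀]
        gcongr
        · linarith [add_one_le_exp α]
        · exact three_mul_div_rpow_le_of_half_le h hs
        · exact h.exponent_mul_div_le hsT
    _ = 6 * (t₀ / T) * (referenceWeight d α t₀ * exp (α + -5 * (α - 1) + 1.001 * α)) := by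
        simp only [exp_add]
        ring
    _ ≤ 6 * (t₀ / T) * (referenceWeight d α t₀ * exp (-(0.8 * α))) := by
        gcongr
        linarith

lemma exp_mul_rpow_le (ht₁ : 0 < t₁) (ht : t₁ ≤ t₀) (hx : x ≤ y) (ha : a ≤ y) :
    exp x * (t₀ / t₁) ^ a ≤ (exp 1 * t₀ / t₁) ^ y := by
  have hone : 1 ≤ t₀ / t₁ := (one_le_div₀ ht₁).2 ht
  rw [mul_div_assoc, mul_rpow (exp_pos 1).le (by positivity), ← exp_mul, one_mul]
  gcongr

lemma three_mul_div_rpow (ht₀ : 0 < t₀) (ht₁ : 0 < t₁) :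
    (3 * t₀ / t₁) ^ (d / 2 + α) = (3 : ℝ) ^ ((d : ℝ) / 2) * 3 ^ α *
      (t₀ / t₁) ^ α * (t₀ ^ ((d : ℝ) / 2) * t₁ ^ (-(d : ℝ) / 2)) := by
  rw [mul_div_assoc, mul_rpow (by norm_num) (by positivity), rpow_add (by norm_num),
    rpow_add (by positivity), div_rpow ht₀.le ht₁.le, neg_div, rpow_neg ht₁.le]
  ring

lemma mul_carlemanAmplitude_initial_le (h : CarlemanScales T ρ α t₀ t₁) {C : ℝ} (hC : 1 ≤ C) :
    4 * T / t₀ * (α / 2 * carlemanAmplitude d α (2 * T) t₁) ≤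
      3 ^ d * referenceWeight d α t₀ *
        (t₀ ^ ((d : ℝ) / 2) * (exp 1 * t₀ / t₁) ^ (C * ρ ^ 2 / t₀) * t₁ ^ (-(d : ℝ) / 2)) := by
  have ht₀ := h.t₀_pos
  have ht₁ := h.t₁_pos
  have hT := h.time_pos
  have hα := h.le_exponent
  have hR : 0 < referenceWeight d α t₀ := referenceWeight_pos ht₀
  have hthree_half : (3 : ℝ) ^ ((d : ℝ) / 2) ≤ 3 ^ d := by
    rw [← rpow_natCast]
    exact rpow_le_rpow_of_exponent_le (by norm_num) (half_le_self d.cast_nonneg)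
  have hthree : (3 : ℝ) ^ α ≤ exp (2 * α) :=
    rpow_le_exp_mul (by norm_num) (by linarith) (by linarith [add_one_le_exp (2 : ℝ)])
  have hquadratic : 2 * α * (α / 10) ≤ exp α := by
    nlinarith [quadratic_le_exp_of_nonneg h.exponent_pos.le]
  have hexponent : 400 * α ≤ C * ρ ^ 2 / t₀ := by
    rw [le_div_iff₀ ht₀, ← h.radius_sq]
    exact le_mul_of_one_le_left (sq_nonneg ρ) hC
  have htime : 2 * α * t₁ / (2 * T) ≤ 1.001 * α :=
    h.exponent_mul_div_le (by linarith [h.t₁_le, h.t₀_le])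
  calc 4 * T / t₀ * (α / 2 * carlemanAmplitude d α (2 * T) t₁)
      = referenceWeight d α t₀ * (3 : ℝ) ^ ((d : ℝ) / 2) *
          (2 * α * (T / t₀) * 3 ^ α * exp (2 * α * t₁ / (2 * T)) * (t₀ / t₁) ^ α) *
          (t₀ ^ ((d : ℝ) / 2) * t₁ ^ (-(d : ℝ) / 2)) := by
        rw [carlemanAmplitude_eq ht₀ ht₁, three_mul_div_rpow ht₀ ht₁]
        ring
    _ ≤ referenceWeight d α t₀ * 3 ^ d *
          (2 * α * (α / 10) * exp (2 * α) * exp (1.001 * α) * (t₀ / t₁) ^ α) *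
          (t₀ ^ ((d : ℝ) / 2) * t₁ ^ (-(d : ℝ) / 2)) := by
        have := h.time_div_le
        gcongr
    _ ≤ referenceWeight d α t₀ * 3 ^ d *
          (exp α * exp (2 * α) * exp (1.001 * α) * (t₀ / t₁) ^ α) *
          (t₀ ^ ((d : ℝ) / 2) * t₁ ^ (-(d : ℝ) / 2)) := by
        gcongr
    _ ≤ referenceWeight d α t₀ * 3 ^ d * (exp 1 * t₀ / t₁) ^ (C * ρ ^ 2 / t₀) *
          (t₀ ^ ((d : ℝ) / 2) * t₁ ^ (-(d : ℝ) / 2)) := by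
        rw [← exp_add, ← exp_add]
        gcongr
        exact exp_mul_rpow_le ht₁ h.t₁_le (by linarith) (by linarith)
    _ = 3 ^ d * referenceWeight d α t₀ *
        (t₀ ^ ((d : ℝ) / 2) * (exp 1 * t₀ / t₁) ^ (C * ρ ^ 2 / t₀) * t₁ ^ (-(d : ℝ) / 2)) := by
        ring

lemma carlemanWeight_le_carlemanAmplitude {z : Spacetime d} {S : ℝ} (hs : 0 < z.1 + t₁) :
    carlemanWeight α S t₁ z ≤ carlemanAmplitude d α S (z.1 + t₁) := by
  refine mul_le_of_le_one_right (carlemanAmplitude_pos hs).le (exp_le_one_iff.2 ?_)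
  rw [neg_div]
  exact neg_nonpos.2 (by positivity)

lemma mul_carlemanWeight_le_farBound (h : CarlemanScales T ρ α t₀ t₁) {z : Spacetime d}
    (hz : z.1 ∈ Icc 0 T) (hfar : ρ / 2 ≤ ‖z.2‖) :
    (z.1 + t₁) * carlemanWeight α (2 * T) t₁ z ≤ farBound d α t₀ := by
  have hs := h.shiftedTime_pos hz.1
  have hamp := carlemanAmplitude_pos (d := d) (α := α) (S := 2 * T) hs
  have hnorm : ρ ^ 2 / 4 ≤ ‖z.2‖ ^ 2 := by nlinarith [h.radius_pos]
  have hexponent : -‖z.2‖ ^ 2 / (4 * (z.1 + t₁)) ≤ -(25 * α * t₀ / (z.1 + t₁)) := by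
    rw [neg_div, neg_le_neg_iff, div_le_div_iff₀ hs (by positivity)]
    nlinarith [h.radius_sq]
  refine le_trans ?_ (mul_carlemanAmplitude_mul_exp_le h hs (h.shiftedTime_le hz.2))
  unfold carlemanWeight
  gcongr

lemma referenceWeight_mul_exp_le (h : CarlemanScales T ρ α t₀ t₁) {z : Spacetime d}
    (hz : z.1 ∈ Icc t₀ (2 * t₀)) :
    referenceWeight d α t₀ * exp (-‖z.2‖ ^ 2 / (4 * z.1)) ≤ carlemanWeight α (2 * T) t₁ z := by
  have ht : 0 < z.1 := h.t₀_pos.trans_le hz.1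
  have hs := h.shiftedTime_pos ht.le
  have hα := h.exponent_pos
  have hT := h.time_pos
  have hpow : referenceWeight d α t₀ ≤ (z.1 + t₁) ^ (-(d / 2 + α)) :=
    rpow_le_rpow_of_nonpos hs (by linarith [hz.2, h.t₁_le]) (by rw [neg_nonpos]; positivity)
  have hamp : referenceWeight d α t₀ ≤ carlemanAmplitude d α (2 * T) (z.1 + t₁) :=
    hpow.trans (le_mul_of_one_le_right (by positivity) (one_le_exp (by positivity)))
  refine mul_le_mul hamp (exp_le_exp.2 ?_) (exp_pos _).le (carlemanAmplitude_pos hs).le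
  rw [neg_div, neg_div, neg_le_neg_iff]
  gcongr
  linarith [h.t₁_pos]

lemma carlemanMultiplier_le (hT : 0 < T) (hs : 0 ≤ s) (hsT : s ≤ 2 * T) :
    carlemanMultiplier (2 * T) s ≤ 2 * s := by
  have : s / (2 * T) ≤ 1 := (div_le_one (by positivity)).2 hsT
  unfold carlemanMultiplier
  nlinarith

lemma carlemanPotential_le (hα : 0 ≤ α) (hs : 0 ≤ s) {S : ℝ} :
    carlemanPotential α S s ≤ 2 * α / S := by
  unfold carlemanPotential
  rw [neg_div]
  linarith [div_nonneg hα hs]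

lemma neg_carlemanMultiplier_mul_carlemanPotential_le {S : ℝ} (hα : 0 ≤ α) (hS : 0 < S)
    (hs : 0 < s) : -(carlemanMultiplier S s * carlemanPotential α S s) ≤ α := by
  have hexpand : -(carlemanMultiplier S s * carlemanPotential α S s) =
      α - (α * (s / S) + 2 * α * (s / S) ^ 2) := by
    unfold carlemanMultiplier carlemanPotential
    field_simp
    ring
  rw [hexpand]
  exact sub_le_self _ (by positivity)

end WeightEstimates

/-! ### Pointwise estimates for the Carleman integrand -/

section PointwiseEstimates

variable {d : ℕ} {κ : Type*} [Fintype κ] {T ρ α t₀ t₁ M : ℝ} {ψ v : Spacetime d → ℝ}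
  {f : κ → Spacetime d → ℝ} {z : Spacetime d} {x : EuclideanSpace ℝ (Fin d)}

/-- The squared norm `|f|²` of a family of functions, the components of a vector field. -/
def sumSq (f : κ → Spacetime d → ℝ) (z : Spacetime d) : ℝ := ∑ k, f k z ^ 2

/-- The squared norm `|∇f|²` of the spatial gradient of a vector field. -/
def sumGradSq (f : κ → Spacetime d → ℝ) (z : Spacetime d) : ℝ := ∑ k, gradSq (f k) z

/-- The scale-invariant energy density `T⁻¹ |f|² + |∇f|²` of a vector field, integrated on both
sides of the theorem. -/
def energyDensity (T : ℝ) (f : κ → Spacetime d → ℝ) (z : Spacetime d) : ℝ :=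
  T⁻¹ * sumSq f z + sumGradSq f z

/-- The pointwise differential inequality for `L = ∂ₜ + Δ`, in the squared form which the
Carleman estimate absorbs. -/
def HeatOpBound (T : ℝ) (f : κ → Spacetime d → ℝ) (z : Spacetime d) : Prop :=
  ∑ k, heatOp (f k) z ^ 2 ≤ sumSq f z / (32 * T ^ 2) + sumGradSq f z / (4 * T)

lemma sumSq_nonneg : 0 ≤ sumSq f z := Finset.sum_nonneg fun _ _ => sq_nonneg _

lemma sumGradSq_nonneg : 0 ≤ sumGradSq f z := Finset.sum_nonneg fun _ _ => gradSq_nonneg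

lemma energyDensity_nonneg (hT : 0 ≤ T) : 0 ≤ energyDensity T f z :=
  add_nonneg (mul_nonneg (inv_nonneg.2 hT) sumSq_nonneg) sumGradSq_nonneg

lemma continuous_sumSq (hf : ∀ k, Continuous (f k)) : Continuous (sumSq f) := by
  unfold sumSq
  fun_prop

lemma continuous_energyDensity (hf : ∀ k, ContDiff ℝ 1 (f k)) :
    Continuous (energyDensity T f) :=
  ((continuous_sumSq fun k => (hf k).continuous).const_mul T⁻¹).add
    (continuous_finsetSum _ fun k _ => continuous_gradSq (hf k))

lemma le_carlemanIntegrand (hT : 0 < T) (hα : 0 ≤ α) (hs : 0 < z.1 + t₁)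
    (hsT : z.1 + t₁ ≤ 2 * T) :
    ((z.1 + t₁) / (2 * T) * gradSq v z + α / (4 * T) * v z ^ 2 - (z.1 + t₁) * heatOp v z ^ 2) *
      carlemanWeight α (2 * T) t₁ z ≤ carlemanIntegrand α (2 * T) t₁ v z := by
  refine mul_le_mul_of_nonneg_right ?_ (carlemanWeight_pos hs).le
  have hcoeff : α / (4 * T) ≤ α * (1 + 4 * (z.1 + t₁) / (2 * T)) / (2 * (2 * T)) := by
    rw [← mul_assoc 2 2 T, show (2 : ℝ) * 2 = 4 by norm_num]
    gcongr
    exact le_mul_of_one_le_right hα (le_add_of_nonneg_right (by positivity))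
  have hmultiplier : carlemanMultiplier (2 * T) (z.1 + t₁) / 2 ≤ z.1 + t₁ := by
    linarith [carlemanMultiplier_le hT hs.le hsT]
  gcongr

/-- Near the axis the cutoff is `1`, and the good terms absorb `|L f|²`. -/
lemma le_sum_carlemanIntegrand_of_norm_le (h : CarlemanScales T ρ α t₀ t₁)
    (hψ : IsSpatialCutoff M ρ ψ) (hz : z.1 ∈ Icc 0 T) (hnear : ‖z.2‖ ≤ ρ / 2)
    (hL : HeatOpBound T f z) :
    ((z.1 + t₁) / (4 * T) * sumGradSq f z + T⁻¹ * sumSq f z) * carlemanWeight α (2 * T) t₁ z ≤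
      ∑ k, carlemanIntegrand α (2 * T) t₁ (fun z => ψ z * f k z) z := by
  have hT := h.time_pos
  have hs := h.shiftedTime_pos hz.1
  have hsT := h.shiftedTime_le hz.2
  have hterm : ∀ k, ((z.1 + t₁) / (2 * T) * gradSq (f k) z + α / (4 * T) * f k z ^ 2
      - (z.1 + t₁) * heatOp (f k) z ^ 2) * carlemanWeight α (2 * T) t₁ z ≤
        carlemanIntegrand α (2 * T) t₁ (fun z => ψ z * f k z) z := fun k => by
    have heq := hψ.mul_eventuallyEq (f := f k) hnear
    rw [← gradSq_congr heq, ← heatOp_congr heq, ← heq.eq_of_nhds]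
    exact le_carlemanIntegrand hT h.exponent_pos.le hs (by linarith)
  refine le_trans ?_ (Finset.sum_le_sum fun k _ => hterm k)
  rw [← Finset.sum_mul, Finset.sum_sub_distrib, Finset.sum_add_distrib, ← Finset.mul_sum,
    ← Finset.mul_sum, ← Finset.mul_sum]
  refine mul_le_mul_of_nonneg_right ?_ (carlemanWeight_pos hs).le
  have hN : 0 ≤ T⁻¹ * sumSq f z := mul_nonneg (inv_nonneg.2 hT.le) sumSq_nonneg
  have hheat := mul_le_mul_of_nonneg_left hL hs.le
  have hN_heat : (z.1 + t₁) * (sumSq f z / (32 * T ^ 2)) ≤ T⁻¹ * sumSq f z := by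
    have hratio : (z.1 + t₁) / T ≤ 1.001 := (div_le_iff₀ hT).2 hsT
    have hrw : (z.1 + t₁) * (sumSq f z / (32 * T ^ 2)) =
        (z.1 + t₁) / T / 32 * (T⁻¹ * sumSq f z) := by field_simp
    rw [hrw]
    exact mul_le_of_le_one_left hN (by linarith)
  have hN_good : 2 * (T⁻¹ * sumSq f z) ≤ α / (4 * T) * sumSq f z := by
    have hrw : α / (4 * T) * sumSq f z = α / 4 * (T⁻¹ * sumSq f z) := by field_simp
    rw [hrw]
    exact mul_le_mul_of_nonneg_right (by linarith [h.le_exponent]) hN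
  have hgrad : (z.1 + t₁) / (2 * T) * sumGradSq f z =
      (z.1 + t₁) / (4 * T) * sumGradSq f z + (z.1 + t₁) * (sumGradSq f z / (4 * T)) := by
    field_simp
    ring
  simp only [sumGradSq, sumSq] at *
  linarith

lemma sum_heatOp_cutoff_sq_le (hT : 0 < T) (hTρ : 4000 * T ≤ ρ ^ 2) (hM : 1 ≤ M)
    (hψ : IsSpatialCutoff M ρ ψ) (hf : ∀ k, ContDiff ℝ 2 (f k)) (hL : HeatOpBound T f z) :
    ∑ k, heatOp (fun z => ψ z * f k z) z ^ 2 ≤ M / T * energyDensity T f z := by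
  have hρ₂ : M / ρ ^ 2 ≤ M / (4000 * T) := by gcongr
  have hρ₄ : M / ρ ^ 4 ≤ M / (4000 * T) ^ 2 := by
    rw [show ρ ^ 4 = (ρ ^ 2) ^ 2 by ring]
    gcongr
  have hterm : ∀ k, heatOp (fun z => ψ z * f k z) z ^ 2 ≤ 3 * heatOp (f k) z ^ 2 +
      12 * (M / (4000 * T)) * gradSq (f k) z + 3 * (M / (4000 * T) ^ 2) * f k z ^ 2 := fun k => by
    have hgrad := gradSq_nonneg (f := f k) (z := z)
    refine (hψ.heatOp_mul_sq_le (hf k)).trans ?_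
    gcongr
  refine (Finset.sum_le_sum fun k _ => hterm k).trans ?_
  rw [Finset.sum_add_distrib, Finset.sum_add_distrib, ← Finset.mul_sum, ← Finset.mul_sum,
    ← Finset.mul_sum]
  have hN : 0 ≤ sumSq f z / T ^ 2 := div_nonneg sumSq_nonneg (sq_nonneg T)
  have hG : 0 ≤ sumGradSq f z / T := div_nonneg sumGradSq_nonneg hT.le
  calc 3 * ∑ k, heatOp (f k) z ^ 2 + 12 * (M / (4000 * T)) * sumGradSq f z
        + 3 * (M / (4000 * T) ^ 2) * sumSq f z
      ≤ 3 * (sumSq f z / (32 * T ^ 2) + sumGradSq f z / (4 * T))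
        + 12 * (M / (4000 * T)) * sumGradSq f z + 3 * (M / (4000 * T) ^ 2) * sumSq f z := by
        gcongr
        exact hL
    _ = (3 / 32 + 3 / 16000000 * M) * (sumSq f z / T ^ 2)
        + (3 / 4 + 3 / 1000 * M) * (sumGradSq f z / T) := by
        field_simp
        ring
    _ ≤ M * (sumSq f z / T ^ 2) + M * (sumGradSq f z / T) := by
        gcongr <;> linarith
    _ = M / T * energyDensity T f z := by
        unfold energyDensity
        field_simp

lemma neg_le_sum_carlemanIntegrand (h : CarlemanScales T ρ α t₀ t₁) (hM : 1 ≤ M)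
    (hψ : IsSpatialCutoff M ρ ψ) (hf : ∀ k, ContDiff ℝ 2 (f k)) (hz : z.1 ∈ Icc 0 T)
    (hL : HeatOpBound T f z) :
    -(M / T * ((z.1 + t₁) * carlemanWeight α (2 * T) t₁ z) * energyDensity T f z) ≤
      ∑ k, carlemanIntegrand α (2 * T) t₁ (fun z => ψ z * f k z) z := by
  have hT := h.time_pos
  have hα := h.exponent_pos
  have hs := h.shiftedTime_pos hz.1
  have hsT := h.shiftedTime_le hz.2
  have hweight := (carlemanWeight_pos (α := α) (S := 2 * T) hs).le
  have hterm : ∀ k, -((z.1 + t₁) * carlemanWeight α (2 * T) t₁ z) *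
      heatOp (fun z => ψ z * f k z) z ^ 2 ≤
        carlemanIntegrand α (2 * T) t₁ (fun z => ψ z * f k z) z := fun k => by
    refine le_trans ?_ (le_carlemanIntegrand hT hα.le hs (by linarith))
    have hgrad := gradSq_nonneg (f := fun z => ψ z * f k z) (z := z)
    have hgood : 0 ≤ (z.1 + t₁) / (2 * T) * gradSq (fun z => ψ z * f k z) z +
        α / (4 * T) * (ψ z * f k z) ^ 2 := by positivity
    linarith [mul_nonneg hgood hweight]
  refine le_trans ?_ (Finset.sum_le_sum fun k _ => hterm k)
  rw [← Finset.mul_sum]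
  have hsum := mul_le_mul_of_nonneg_left
    (sum_heatOp_cutoff_sq_le hT h.time_le hM hψ hf hL) (mul_nonneg hs.le hweight)
  linarith

lemma carlemanEnergy_cutoff_le (h : CarlemanScales T ρ α t₀ t₁) (hM : 1 ≤ M)
    (hψ : IsSpatialCutoff M ρ ψ) (hv : Differentiable ℝ v) (hs : 0 ≤ z.1 + t₁) :
    carlemanEnergy α (2 * T) t₁ (fun z => ψ z * v z) z ≤
      2 * M * α * (T⁻¹ * v z ^ 2 + gradSq v z) := by
  have hT := h.time_pos
  have hα := h.le_exponent
  have hρ : M / ρ ^ 2 ≤ M / (4000 * T) := by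
    gcongr
    exact h.time_le
  have hgrad := gradSq_nonneg (f := v) (z := z)
  have hα_le : α ≤ M * α := le_mul_of_one_le_left h.exponent_pos.le hM
  have hM_le : M ≤ M * α := le_mul_of_one_le_right (by linarith) (by linarith)
  have hpotential : carlemanPotential α (2 * T) (z.1 + t₁) / 2 * (ψ z * v z) ^ 2 ≤
      2 * α / (2 * T) / 2 * v z ^ 2 :=
    calc carlemanPotential α (2 * T) (z.1 + t₁) / 2 * (ψ z * v z) ^ 2
        ≤ 2 * α / (2 * T) / 2 * (ψ z * v z) ^ 2 := by
          gcongr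
          exact carlemanPotential_le h.exponent_pos.le hs
      _ ≤ 2 * α / (2 * T) / 2 * v z ^ 2 :=
          mul_le_mul_of_nonneg_left hψ.mul_sq_le (by positivity)
  calc carlemanEnergy α (2 * T) t₁ (fun z => ψ z * v z) z
      ≤ 2 * gradSq v z + 2 * (M / ρ ^ 2) * v z ^ 2 + 2 * α / (2 * T) / 2 * v z ^ 2 :=
        add_le_add (hψ.gradSq_mul_le hv) hpotential
    _ ≤ 2 * gradSq v z + 2 * (M / (4000 * T)) * v z ^ 2 + 2 * α / (2 * T) / 2 * v z ^ 2 := by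
        gcongr
    _ = 2 * gradSq v z + (M / 2000 + α / 2) * (T⁻¹ * v z ^ 2) := by
        field_simp
        ring
    _ ≤ 2 * M * α * gradSq v z + 2 * M * α * (T⁻¹ * v z ^ 2) := by
        gcongr <;> linarith
    _ = 2 * M * α * (T⁻¹ * v z ^ 2 + gradSq v z) := by ring

lemma sum_carlemanDensity_le (h : CarlemanScales T ρ α t₀ t₁) (hM : 1 ≤ M)
    (hψ : IsSpatialCutoff M ρ ψ) (hf : ∀ k, Differentiable ℝ (f k)) (hz : z.1 ∈ Icc 0 T) :
    ∑ k, carlemanDensity α (2 * T) t₁ (fun z => ψ z * f k z) z ≤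
      6 * T * M * (α * carlemanAmplitude d α (2 * T) (z.1 + t₁)) * energyDensity T f z := by
  have hT := h.time_pos
  have hα := h.exponent_pos
  have hs := h.shiftedTime_pos hz.1
  have hsT := h.shiftedTime_le hz.2
  have hmultiplier : carlemanMultiplier (2 * T) (z.1 + t₁) ≤ 3 * T :=
    (carlemanMultiplier_le hT hs.le (by linarith)).trans (by linarith)
  have hmultiplier_pos := carlemanMultiplier_pos (S := 2 * T) (by positivity) hs
  have hweight_pos := carlemanWeight_pos (α := α) (S := 2 * T) hs
  have hterm : ∀ k, carlemanDensity α (2 * T) t₁ (fun z => ψ z * f k z) z ≤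
      3 * T * (2 * M * α * (T⁻¹ * f k z ^ 2 + gradSq (f k) z)) *
        carlemanAmplitude d α (2 * T) (z.1 + t₁) := fun k => by
    have hgrad := gradSq_nonneg (f := f k) (z := z)
    refine (mul_le_mul_of_nonneg_right (mul_le_mul_of_nonneg_left
      (carlemanEnergy_cutoff_le h hM hψ (hf k) hs.le) hmultiplier_pos.le) hweight_pos.le).trans ?_
    gcongr
    exact carlemanWeight_le_carlemanAmplitude hs
  refine (Finset.sum_le_sum fun k _ => hterm k).trans_eq ?_
  simp only [← Finset.sum_mul, ← Finset.mul_sum, Finset.sum_add_distrib]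
  unfold energyDensity sumSq sumGradSq
  ring

lemma neg_sum_carlemanDensity_zero_le (h : CarlemanScales T ρ α t₀ t₁)
    (hψ : IsSpatialCutoff M ρ ψ) :
    -∑ k, carlemanDensity α (2 * T) t₁ (fun z => ψ z * f k z) (0, x) ≤
      α / 2 * carlemanAmplitude d α (2 * T) t₁ *
        (sumSq f (0, x) * exp (-‖x‖ ^ 2 / (4 * t₁))) := by
  have ht₁ := h.t₁_pos
  have hS : 0 < 2 * T := mul_pos two_pos h.time_pos
  have hα := h.exponent_pos
  have hmultiplier := carlemanMultiplier_pos hS ht₁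
  have hterm : ∀ k, -carlemanDensity α (2 * T) t₁ (fun z => ψ z * f k z) (0, x) ≤
      α / 2 * f k (0, x) ^ 2 * carlemanWeight α (2 * T) t₁ (0, x) := fun k => by
    have hgrad := gradSq_nonneg (f := fun z => ψ z * f k z) (z := (0, x))
    have hpotential := mul_le_mul_of_nonneg_right
      (neg_carlemanMultiplier_mul_carlemanPotential_le hα.le hS ht₁)
      (sq_nonneg (ψ (0, x) * f k (0, x)))
    have hcutoff := mul_le_mul_of_nonneg_left (hψ.mul_sq_le (f := f k) (z := (0, x))) hα.le
    rw [carlemanDensity, carlemanEnergy, ← neg_mul]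
    refine mul_le_mul_of_nonneg_right ?_ (carlemanWeight_pos (by simpa using ht₁)).le
    simp only [zero_add]
    linarith [mul_nonneg hmultiplier.le hgrad]
  rw [← Finset.sum_neg_distrib]
  refine (Finset.sum_le_sum fun k _ => hterm k).trans_eq ?_
  rw [← Finset.sum_mul, ← Finset.mul_sum, carlemanWeight, sumSq]
  simp only [zero_add]
  ring

end PointwiseEstimates

/-! ### The Carleman inequality for functions on the whole space-time -/

section CarlemanInequality

open Metric

variable {d : ℕ} {κ : Type*} [Fintype κ] {T T₀ ρ α t₀ t₁ M : ℝ} {ψ g : Spacetime d → ℝ}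
  {f : κ → Spacetime d → ℝ} {z : Spacetime d} {K : Set (EuclideanSpace ℝ (Fin d))}

lemma exists_slice_integral_le (hg : Continuous g) (hg_nonneg : ∀ z, 0 ≤ g z) (hT : 0 < T)
    (hK : IsCompact K) :
    ∃ T₀ ∈ Icc (T / 2) T, ∫ x in K, g (T₀, x) ≤ 2 / T * ∫ z in Icc 0 T ×ˢ K, g z := by
  have hintegrable : IntegrableOn g (Icc 0 T ×ˢ K) :=
    hg.continuousOn.integrableOn_compact (isCompact_Icc.prod hK)
  rw [Measure.volume_eq_prod] at hintegrable ⊢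
  rw [setIntegral_prod _ hintegrable]
  rw [IntegrableOn, ← Measure.prod_restrict] at hintegrable
  have hslices : IntegrableOn (fun t => ∫ x in K, g (t, x)) (Icc 0 T) :=
    hintegrable.integral_prod_left
  have hsub : Icc (T / 2) T ⊆ Icc 0 T := Icc_subset_Icc_left (by positivity)
  obtain ⟨T₀, hT₀, hle⟩ := exists_le_setAverage (μ := volume) (s := Icc (T / 2) T)
    (by simp [hT]) (by simp) (hslices.mono_set hsub)
  have hvolume : volume.real (Icc (T / 2) T) = T / 2 := by
    rw [volume_real_Icc_of_le (by linarith)]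
    ring
  refine ⟨T₀, hT₀, hle.trans ?_⟩
  rw [setAverage_eq, hvolume, smul_eq_mul, inv_div]
  gcongr
  exact Filter.Eventually.of_forall fun t => integral_nonneg fun x => hg_nonneg _

/-- The Carleman integrand of `ψ f`, corrected by a multiple of the energy that makes it
nonnegative on the cylinder. -/
def correctedIntegrand (T α t₀ t₁ M : ℝ) (ψ : Spacetime d → ℝ) (f : κ → Spacetime d → ℝ)
    (z : Spacetime d) : ℝ :=
  ∑ k, carlemanIntegrand α (2 * T) t₁ (fun z => ψ z * f k z) z
    + M / T * farBound d α t₀ * energyDensity T f z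

lemma le_correctedIntegrand_of_norm_le (h : CarlemanScales T ρ α t₀ t₁) (hM : 0 ≤ M)
    (hψ : IsSpatialCutoff M ρ ψ) (hz : z.1 ∈ Icc 0 T) (hnear : ‖z.2‖ ≤ ρ / 2)
    (hL : HeatOpBound T f z) :
    ((z.1 + t₁) / (4 * T) * sumGradSq f z + T⁻¹ * sumSq f z) * carlemanWeight α (2 * T) t₁ z ≤
      correctedIntegrand T α t₀ t₁ M ψ f z :=
  (le_sum_carlemanIntegrand_of_norm_le h hψ hz hnear hL).trans <| le_add_of_nonneg_right <|
    mul_nonneg (mul_nonneg (div_nonneg hM h.time_pos.le) (farBound_nonneg h.t₀_pos.le))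
      (energyDensity_nonneg h.time_pos.le)

lemma correctedIntegrand_nonneg (h : CarlemanScales T ρ α t₀ t₁) (hM : 1 ≤ M)
    (hψ : IsSpatialCutoff M ρ ψ) (hf : ∀ k, ContDiff ℝ 2 (f k)) (hz : z.1 ∈ Icc 0 T)
    (hL : HeatOpBound T f z) : 0 ≤ correctedIntegrand T α t₀ t₁ M ψ f z := by
  have hT := h.time_pos
  have hs := h.shiftedTime_pos hz.1
  have hE : 0 ≤ energyDensity T f z := energyDensity_nonneg hT.le
  rcases le_total ‖z.2‖ (ρ / 2) with hnear | hfar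
  · refine le_trans ?_ (le_correctedIntegrand_of_norm_le h (by linarith) hψ hz hnear hL)
    have hN : 0 ≤ sumSq f z := sumSq_nonneg
    have hG : 0 ≤ sumGradSq f z := sumGradSq_nonneg
    have hweight := carlemanWeight_pos (α := α) (S := 2 * T) hs
    positivity
  · have hweight : M / T * ((z.1 + t₁) * carlemanWeight α (2 * T) t₁ z) * energyDensity T f z ≤
        M / T * farBound d α t₀ * energyDensity T f z := by
      gcongr
      exact mul_carlemanWeight_le_farBound h hz hfar
    unfold correctedIntegrand
    linarith [neg_le_sum_carlemanIntegrand h hM hψ hf hz hL]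

lemma le_correctedIntegrand_of_mem_box (h : CarlemanScales T ρ α t₀ t₁) (hM : 0 ≤ M)
    (hψ : IsSpatialCutoff M ρ ψ) (ht : z.1 ∈ Icc t₀ (2 * t₀)) (hnear : ‖z.2‖ ≤ ρ / 2)
    (hL : HeatOpBound T f z) :
    t₀ / (4 * T) * referenceWeight d α t₀ *
        (energyDensity T f z * exp (-‖z.2‖ ^ 2 / (4 * z.1))) ≤
      correctedIntegrand T α t₀ t₁ M ψ f z := by
  have hT := h.time_pos
  have ht₀ := h.t₀_pos
  have ht₁ := h.t₁_pos
  have hz : z.1 ∈ Icc 0 T := ⟨by linarith [ht.1], by linarith [ht.2, h.t₀_le]⟩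
  have hs := h.shiftedTime_pos hz.1
  have hN : 0 ≤ T⁻¹ * sumSq f z := mul_nonneg (inv_nonneg.2 hT.le) sumSq_nonneg
  have hG : 0 ≤ sumGradSq f z := sumGradSq_nonneg
  have henergy : t₀ / (4 * T) * energyDensity T f z ≤
      (z.1 + t₁) / (4 * T) * sumGradSq f z + T⁻¹ * sumSq f z := by
    have hsmall : t₀ / (4 * T) ≤ 1 := (div_le_one (by positivity)).2 (by linarith [h.t₀_le])
    have hgrad : t₀ / (4 * T) * sumGradSq f z ≤ (z.1 + t₁) / (4 * T) * sumGradSq f z := by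
      gcongr
      linarith [ht.1]
    unfold energyDensity
    linarith [mul_le_of_le_one_left hN hsmall]
  refine le_trans ?_ (le_correctedIntegrand_of_norm_le h hM hψ hz hnear hL)
  calc t₀ / (4 * T) * referenceWeight d α t₀ *
        (energyDensity T f z * exp (-‖z.2‖ ^ 2 / (4 * z.1)))
      = t₀ / (4 * T) * energyDensity T f z *
          (referenceWeight d α t₀ * exp (-‖z.2‖ ^ 2 / (4 * z.1))) := by ring
    _ ≤ _ := mul_le_mul henergy (referenceWeight_mul_exp_le h ht)
        (mul_nonneg (referenceWeight_pos ht₀).le (exp_pos _).le)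
        (add_nonneg (mul_nonneg (div_nonneg hs.le (by positivity)) hG) hN)

lemma integrableOn_carlemanIntegrand (ht₁ : 0 < t₁) {v : Spacetime d → ℝ} {S : ℝ}
    (hv : ContDiff ℝ 2 v) (hK : IsCompact K) :
    IntegrableOn (carlemanIntegrand α S t₁ v) (Icc 0 T ×ˢ K) :=
  (continuousOn_carlemanIntegrand hv).mono (Icc_prod_subset_shiftedFuture ht₁)
    |>.integrableOn_compact (isCompact_Icc.prod hK)

lemma integrableOn_carlemanDensity (ht₁ : 0 < t₁) {v : Spacetime d → ℝ} {S : ℝ}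
    (hv : ContDiff ℝ 2 v) (hK : IsCompact K) {t : ℝ} (ht : 0 ≤ t) :
    IntegrableOn (fun x => carlemanDensity α S t₁ v (t, x)) K :=
  (contDiffOn_carlemanDensity hv).continuousOn.comp (by fun_prop)
    (fun x _ => Icc_prod_subset_shiftedFuture (T := t) (K := univ) ht₁ ⟨⟨ht, le_rfl⟩, mem_univ x⟩)
    |>.integrableOn_compact hK

lemma integrableOn_energyDensity (hf : ∀ k, ContDiff ℝ 1 (f k)) (hK : IsCompact K) {a b : ℝ} :
    IntegrableOn (energyDensity T f) (Icc a b ×ˢ K) :=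
  (continuous_energyDensity hf).continuousOn.integrableOn_compact (isCompact_Icc.prod hK)

lemma integrableOn_energyDensity_mul_exp (hf : ∀ k, ContDiff ℝ 1 (f k)) (hK : IsCompact K)
    {a b : ℝ} (ha : 0 < a) :
    IntegrableOn (fun z => energyDensity T f z * exp (-‖z.2‖ ^ 2 / (4 * z.1)))
      (Icc a b ×ˢ K) := by
  refine ContinuousOn.integrableOn_compact (isCompact_Icc.prod hK)
    ((continuous_energyDensity hf).continuousOn.mul (continuous_exp.comp_continuousOn ?_))
  exact ContinuousOn.div (by fun_prop) (by fun_prop) fun z hz =>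
    (mul_pos four_pos (ha.trans_le hz.1.1)).ne'

lemma integrableOn_correctedIntegrand (ht₁ : 0 < t₁) (hψ : IsSpatialCutoff M ρ ψ)
    (hf : ∀ k, ContDiff ℝ 2 (f k)) (hK : IsCompact K) {b : ℝ} :
    IntegrableOn (correctedIntegrand T α t₀ t₁ M ψ f) (Icc 0 b ×ˢ K) :=
  (integrable_finsetSum _ fun k _ =>
    integrableOn_carlemanIntegrand ht₁ (hψ.contDiff.mul (hf k)) hK).add <|
  (integrableOn_energyDensity (fun k => (hf k).of_le one_le_two) hK).const_mul _

lemma mul_setIntegral_box_le (h : CarlemanScales T ρ α t₀ t₁) (hM : 1 ≤ M)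
    (hψ : IsSpatialCutoff M ρ ψ) (hf : ∀ k, ContDiff ℝ 2 (f k))
    (hL : ∀ z ∈ Icc 0 T ×ˢ closedBall 0 ρ, HeatOpBound T f z) (hT₀ : T₀ ∈ Icc (T / 2) T) :
    t₀ / (4 * T) * referenceWeight d α t₀ *
        ∫ z in Icc t₀ (2 * t₀) ×ˢ closedBall 0 (ρ / 2),
          energyDensity T f z * exp (-‖z.2‖ ^ 2 / (4 * z.1)) ≤
      ∫ z in Icc 0 T₀ ×ˢ closedBall 0 ρ, correctedIntegrand T α t₀ t₁ M ψ f z := by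
  have ht₀ := h.t₀_pos
  have hρ := h.radius_pos
  have hcylinder : Icc 0 T₀ ×ˢ closedBall 0 ρ ⊆
      Icc 0 T ×ˢ closedBall (0 : EuclideanSpace ℝ (Fin d)) ρ :=
    prod_mono (Icc_subset_Icc_right hT₀.2) subset_rfl
  have hbox : Icc t₀ (2 * t₀) ×ˢ closedBall 0 (ρ / 2) ⊆
      Icc 0 T₀ ×ˢ closedBall (0 : EuclideanSpace ℝ (Fin d)) ρ :=
    prod_mono (Icc_subset_Icc ht₀.le (by linarith [hT₀.1, h.t₀_le]))
      (closedBall_subset_closedBall (by linarith))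
  have hintegrable :
      IntegrableOn (correctedIntegrand T α t₀ t₁ M ψ f) (Icc 0 T₀ ×ˢ closedBall 0 ρ) :=
    integrableOn_correctedIntegrand h.t₁_pos hψ hf (isCompact_closedBall 0 ρ)
  rw [← integral_const_mul]
  refine (setIntegral_mono_on ?_ (hintegrable.mono_set hbox)
    (measurableSet_Icc.prod measurableSet_closedBall) fun z hz => ?_).trans
    (setIntegral_mono_set hintegrable ?_ hbox.eventuallyLE)
  · exact (integrableOn_energyDensity_mul_exp (fun k => (hf k).of_le one_le_two)
      (isCompact_closedBall 0 (ρ / 2)) ht₀).const_mul _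
  · exact le_correctedIntegrand_of_mem_box h (by linarith) hψ hz.1
      (mem_closedBall_zero_iff.1 hz.2) (hL z (hcylinder (hbox hz)))
  · filter_upwards [ae_restrict_mem (measurableSet_Icc.prod measurableSet_closedBall)] with z hz
    exact correctedIntegrand_nonneg h hM hψ hf (hcylinder hz).1 (hL z (hcylinder hz))

lemma setIntegral_correctedIntegrand_le (h : CarlemanScales T ρ α t₀ t₁) (hM : 0 ≤ M)
    (hψ : IsSpatialCutoff M ρ ψ) (hf : ∀ k, ContDiff ℝ 2 (f k)) (hT₀ : T₀ ∈ Icc 0 T) :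
    ∫ z in Icc 0 T₀ ×ˢ closedBall 0 ρ, correctedIntegrand T α t₀ t₁ M ψ f z ≤
      (∫ x in closedBall 0 ρ,
          ∑ k, carlemanDensity α (2 * T) t₁ (fun z => ψ z * f k z) (T₀, x))
        + (∫ x in closedBall 0 ρ,
          -∑ k, carlemanDensity α (2 * T) t₁ (fun z => ψ z * f k z) (0, x))
        + M / T * farBound d α t₀ * ∫ z in Icc 0 T ×ˢ closedBall 0 ρ, energyDensity T f z := by
  have hT := h.time_pos
  have hball := isCompact_closedBall (0 : EuclideanSpace ℝ (Fin d)) ρ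
  have hv : ∀ k, ContDiff ℝ 2 fun z => ψ z * f k z := fun k => hψ.contDiff.mul (hf k)
  have hf₁ : ∀ k, ContDiff ℝ 1 (f k) := fun k => (hf k).of_le one_le_two
  have hintegrand : ∀ k ∈ Finset.univ, IntegrableOn
      (carlemanIntegrand α (2 * T) t₁ fun z => ψ z * f k z) (Icc 0 T₀ ×ˢ closedBall 0 ρ) :=
    fun k _ => integrableOn_carlemanIntegrand h.t₁_pos (hv k) hball
  have hdensity : ∀ t, 0 ≤ t → ∀ k ∈ Finset.univ, IntegrableOn
      (fun x => carlemanDensity α (2 * T) t₁ (fun z => ψ z * f k z) (t, x)) (closedBall 0 ρ) :=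
    fun t ht k _ => integrableOn_carlemanDensity h.t₁_pos (hv k) hball ht
  have henergy : ∫ z in Icc 0 T₀ ×ˢ closedBall 0 ρ, energyDensity T f z ≤
      ∫ z in Icc 0 T ×ˢ closedBall 0 ρ, energyDensity T f z :=
    setIntegral_mono_set (integrableOn_energyDensity hf₁ hball)
      (Filter.Eventually.of_forall fun z => energyDensity_nonneg hT.le)
      (prod_mono (Icc_subset_Icc_right hT₀.2) subset_rfl).eventuallyLE
  unfold correctedIntegrand
  rw [integral_add (integrable_finsetSum _ hintegrand)
    ((integrableOn_energyDensity hf₁ hball).const_mul _), integral_finsetSum _ hintegrand,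
    integral_const_mul, integral_neg, integral_finsetSum _ (hdensity T₀ hT₀.1),
    integral_finsetSum _ (hdensity 0 le_rfl), ← sub_eq_add_neg, ← Finset.sum_sub_distrib]
  have hfar : 0 ≤ M / T * farBound d α t₀ :=
    mul_nonneg (div_nonneg hM hT.le) (farBound_nonneg h.t₀_pos.le)
  gcongr with k
  exact setIntegral_carlemanIntegrand_le (by positivity) h.t₁_pos hT₀.1 (hv k) fun z hz => by
    simp [hψ.eq_zero z hz]

lemma setIntegral_sum_carlemanDensity_final_le (h : CarlemanScales T ρ α t₀ t₁) (hM : 1 ≤ M)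
    (hψ : IsSpatialCutoff M ρ ψ) (hf : ∀ k, ContDiff ℝ 2 (f k)) (hT₀ : T₀ ∈ Icc (T / 2) T)
    (hslice : ∫ x in closedBall 0 ρ, energyDensity T f (T₀, x) ≤
      2 / T * ∫ z in Icc 0 T ×ˢ closedBall 0 ρ, energyDensity T f z) :
    ∫ x in closedBall 0 ρ, ∑ k, carlemanDensity α (2 * T) t₁ (fun z => ψ z * f k z) (T₀, x) ≤
      t₀ / (4 * T) * referenceWeight d α t₀ * (288 * M * exp (-(0.8 * α)) *
        ∫ z in Icc 0 T ×ˢ closedBall 0 ρ, energyDensity T f z) := by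
  have hT := h.time_pos
  have hball := isCompact_closedBall (0 : EuclideanSpace ℝ (Fin d)) ρ
  have hT₀' : T₀ ∈ Icc 0 T := ⟨by linarith [hT₀.1], hT₀.2⟩
  have ht₀ := h.t₀_pos
  have hweight := referenceWeight_pos (d := d) (α := α) ht₀
  have hslice_nonneg : 0 ≤ ∫ x in closedBall 0 ρ, energyDensity T f (T₀, x) :=
    integral_nonneg fun x => energyDensity_nonneg hT.le
  have hamplitude := mul_carlemanAmplitude_le_of_half_le (d := d) h (s := T₀ + t₁)
    (by linarith [hT₀.1, h.t₁_pos]) (h.shiftedTime_le hT₀.2)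
  have hslice_continuous : Continuous fun x => energyDensity T f (T₀, x) :=
    (continuous_energyDensity fun k => (hf k).of_le one_le_two).comp (by fun_prop)
  calc ∫ x in closedBall 0 ρ, ∑ k, carlemanDensity α (2 * T) t₁ (fun z => ψ z * f k z) (T₀, x)
      ≤ ∫ x in closedBall 0 ρ, 6 * T * M * (α * carlemanAmplitude d α (2 * T) (T₀ + t₁)) *
          energyDensity T f (T₀, x) :=
        setIntegral_mono
          (integrable_finsetSum _ fun k _ =>
            integrableOn_carlemanDensity h.t₁_pos (hψ.contDiff.mul (hf k)) hball hT₀'.1)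
          ((hslice_continuous.continuousOn.integrableOn_compact hball).const_mul _)
          fun x => sum_carlemanDensity_le h hM hψ
            (fun k => (hf k).differentiable two_ne_zero) hT₀'
    _ ≤ 6 * T * M * (6 * (t₀ / T) * (referenceWeight d α t₀ * exp (-(0.8 * α)))) *
          (2 / T * ∫ z in Icc 0 T ×ˢ closedBall 0 ρ, energyDensity T f z) := by
        rw [integral_const_mul]
        gcongr
    _ = _ := by
        field_simp
        ring

lemma setIntegral_neg_sum_carlemanDensity_zero_le (h : CarlemanScales T ρ α t₀ t₁)
    (hψ : IsSpatialCutoff M ρ ψ) (hf : ∀ k, ContDiff ℝ 2 (f k)) :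
    ∫ x in closedBall 0 ρ, -∑ k, carlemanDensity α (2 * T) t₁ (fun z => ψ z * f k z) (0, x) ≤
      α / 2 * carlemanAmplitude d α (2 * T) t₁ *
        ∫ x in closedBall 0 ρ, sumSq f (0, x) * exp (-‖x‖ ^ 2 / (4 * t₁)) := by
  have hball := isCompact_closedBall (0 : EuclideanSpace ℝ (Fin d)) ρ
  have hinitial : Continuous fun x : EuclideanSpace ℝ (Fin d) =>
      sumSq f (0, x) * exp (-‖x‖ ^ 2 / (4 * t₁)) :=
    ((continuous_sumSq fun k => (hf k).continuous).comp (by fun_prop)).mul (by fun_prop)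
  rw [← integral_const_mul]
  exact setIntegral_mono
    (integrable_finsetSum _ fun k _ =>
      integrableOn_carlemanDensity h.t₁_pos (hψ.contDiff.mul (hf k)) hball le_rfl).neg
    ((hinitial.continuousOn.integrableOn_compact hball).const_mul _)
    fun x => neg_sum_carlemanDensity_zero_le h hψ

lemma mul_setIntegral_box_le_add (h : CarlemanScales T ρ α t₀ t₁) (hM : 1 ≤ M)
    (hψ : IsSpatialCutoff M ρ ψ) (hf : ∀ k, ContDiff ℝ 2 (f k))
    (hL : ∀ z ∈ Icc 0 T ×ˢ closedBall 0 ρ, HeatOpBound T f z) :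
    t₀ / (4 * T) * referenceWeight d α t₀ *
        ∫ z in Icc t₀ (2 * t₀) ×ˢ closedBall 0 (ρ / 2),
          energyDensity T f z * exp (-‖z.2‖ ^ 2 / (4 * z.1)) ≤
      t₀ / (4 * T) * referenceWeight d α t₀ *
          ((288 * M + 12 * M * d.factorial) * exp (-(0.8 * α)) *
            ∫ z in Icc 0 T ×ˢ closedBall 0 ρ, energyDensity T f z)
        + α / 2 * carlemanAmplitude d α (2 * T) t₁ *
            ∫ x in closedBall 0 ρ, sumSq f (0, x) * exp (-‖x‖ ^ 2 / (4 * t₁)) := by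
  have hT := h.time_pos
  obtain ⟨T₀, hT₀, hslice⟩ := exists_slice_integral_le
    (continuous_energyDensity (T := T) fun k => (hf k).of_le one_le_two)
    (fun z => energyDensity_nonneg hT.le) hT (isCompact_closedBall 0 ρ)
  refine (mul_setIntegral_box_le h hM hψ hf hL hT₀).trans <|
    (setIntegral_correctedIntegrand_le h (by linarith) hψ hf
      ⟨by linarith [hT₀.1], hT₀.2⟩).trans ?_
  have hfar : M / T * farBound d α t₀ = t₀ / (4 * T) * referenceWeight d α t₀ *
      (12 * M * d.factorial * exp (-(0.8 * α))) := by
    unfold farBound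
    field_simp
    ring
  rw [hfar]
  linarith [setIntegral_sum_carlemanDensity_final_le h hM hψ hf hT₀ hslice,
    setIntegral_neg_sum_carlemanDensity_zero_le h hψ hf]

theorem setIntegral_box_le (h : CarlemanScales T ρ α t₀ t₁) (hM : 1 ≤ M)
    (hψ : IsSpatialCutoff M ρ ψ) (hf : ∀ k, ContDiff ℝ 2 (f k))
    (hL : ∀ z ∈ Icc 0 T ×ˢ closedBall 0 ρ, HeatOpBound T f z) {C : ℝ} (hC : 1 ≤ C) :
    ∫ z in Icc t₀ (2 * t₀) ×ˢ closedBall 0 (ρ / 2),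
        energyDensity T f z * exp (-‖z.2‖ ^ 2 / (4 * z.1)) ≤
      (288 * M + 12 * M * d.factorial) * exp (-(0.8 * α)) *
          (∫ z in Icc 0 T ×ˢ closedBall 0 ρ, energyDensity T f z)
        + 3 ^ d * (t₀ ^ ((d : ℝ) / 2) * (exp 1 * t₀ / t₁) ^ (C * ρ ^ 2 / t₀) *
            t₁ ^ (-(d : ℝ) / 2)) *
          ∫ x in closedBall 0 ρ, sumSq f (0, x) * exp (-‖x‖ ^ 2 / (4 * t₁)) := by
  have hT := h.time_pos
  have ht₀ := h.t₀_pos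
  have hweight := referenceWeight_pos (d := d) (α := α) ht₀
  have hinitial : α / 2 * carlemanAmplitude d α (2 * T) t₁ ≤
      t₀ / (4 * T) * referenceWeight d α t₀ * (3 ^ d *
        (t₀ ^ ((d : ℝ) / 2) * (exp 1 * t₀ / t₁) ^ (C * ρ ^ 2 / t₀) * t₁ ^ (-(d : ℝ) / 2))) := by
    have hle := mul_le_mul_of_nonneg_left (mul_carlemanAmplitude_initial_le (d := d) h hC)
      (show 0 ≤ t₀ / (4 * T) by positivity)
    have hcancel : t₀ / (4 * T) * (4 * T / t₀) = 1 := by field_simp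
    rw [← mul_assoc, hcancel, one_mul] at hle
    linarith
  have hY : 0 ≤ ∫ x in closedBall 0 ρ, sumSq f (0, x) * exp (-‖x‖ ^ 2 / (4 * t₁)) :=
    integral_nonneg fun x => mul_nonneg sumSq_nonneg (exp_pos _).le
  refine le_of_mul_le_mul_left ?_ (show 0 < t₀ / (4 * T) * referenceWeight d α t₀ by positivity)
  linarith [mul_setIntegral_box_le_add h hM hψ hf hL, mul_le_mul_of_nonneg_right hinitial hY]

end CarlemanInequality

/-! ### Vector fields on a cylinder -/

section Cylinder

open Metric Topology

variable {d : ℕ} {κ : Type*} [Fintype κ] {T ρ t : ℝ} {x : EuclideanSpace ℝ (Fin d)}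

theorem exists_setIntegral_box_le (d : ℕ) (κ : Type*) [Fintype κ] :
    ∃ C : ℝ, 1 ≤ C ∧ ∀ (T ρ t₁ t₀ : ℝ) (f : κ → Spacetime d → ℝ),
      0 < ρ → 4000 * T ≤ ρ ^ 2 → 0 < t₁ → t₁ ≤ t₀ → t₀ ≤ T / 1000 →
      (∀ k, ContDiff ℝ 2 (f k)) →
      (∀ z ∈ Icc 0 T ×ˢ closedBall 0 ρ, HeatOpBound T f z) →
      ∫ z in Icc t₀ (2 * t₀) ×ˢ closedBall 0 (ρ / 2),
          energyDensity T f z * exp (-‖z.2‖ ^ 2 / (4 * z.1)) ≤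
        C * (exp (-ρ ^ 2 / (500 * t₀)) *
              (∫ z in Icc 0 T ×ˢ closedBall 0 ρ, energyDensity T f z)
            + t₀ ^ ((d : ℝ) / 2) * (exp 1 * t₀ / t₁) ^ (C * ρ ^ 2 / t₀) *
              ∫ x in closedBall 0 ρ,
                sumSq f (0, x) * t₁ ^ (-(d : ℝ) / 2) * exp (-‖x‖ ^ 2 / (4 * t₁))) := by
  obtain ⟨M, hM, hcutoff⟩ := exists_isSpatialCutoff d
  have hfactorial : (1 : ℝ) ≤ d.factorial := mod_cast d.factorial_pos
  have hpow : (1 : ℝ) ≤ 3 ^ d := one_le_pow₀ (by norm_num)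
  set C : ℝ := (288 * M + 12 * M * d.factorial) * 3 ^ d
  have hconst : 1 ≤ 288 * M + 12 * M * d.factorial := by nlinarith
  have hfar : 288 * M + 12 * M * d.factorial ≤ C :=
    le_mul_of_one_le_right (by positivity) hpow
  have hinitial : (3 : ℝ) ^ d ≤ C := le_mul_of_one_le_left (by positivity) hconst
  refine ⟨C, hpow.trans hinitial, fun T ρ t₁ t₀ f hρ hTρ ht₁ ht ht₀ hf hL => ?_⟩
  obtain ⟨ψ, hψ⟩ := hcutoff ρ hρ
  have ht₀_pos : 0 < t₀ := ht₁.trans_le ht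
  have hT : 0 ≤ T := by linarith
  have h : CarlemanScales T ρ (ρ ^ 2 / (400 * t₀)) t₀ t₁ :=
    ⟨hρ, ht₁, ht, ht₀, hTρ, by field_simp⟩
  have hexponent : -ρ ^ 2 / (500 * t₀) = -(0.8 * (ρ ^ 2 / (400 * t₀))) := by
    field_simp
    norm_num
  have hX : 0 ≤ ∫ z in Icc 0 T ×ˢ closedBall 0 ρ, energyDensity T f z :=
    integral_nonneg fun z => energyDensity_nonneg hT
  have hY : 0 ≤ ∫ x in closedBall 0 ρ, sumSq f (0, x) * exp (-‖x‖ ^ 2 / (4 * t₁)) :=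
    integral_nonneg fun x => mul_nonneg sumSq_nonneg (exp_pos _).le
  refine (setIntegral_box_le h hM hψ hf hL (hpow.trans hinitial)).trans ?_
  simp only [mul_right_comm _ (t₁ ^ (-(d : ℝ) / 2)), integral_mul_const]
  rw [hexponent, mul_add]
  refine (add_le_add (mul_le_mul_of_nonneg_right (mul_le_mul_of_nonneg_right hfar
    (exp_pos _).le) hX) (mul_le_mul_of_nonneg_right (mul_le_mul_of_nonneg_right hinitial
    (by positivity)) hY)).trans_eq ?_
  ring

lemma le_of_sqrt_le_add_sqrt {a N G : ℝ} (hT : 0 < T) (ha : 0 ≤ a) (hN : 0 ≤ N) (hG : 0 ≤ G)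
    (h : √a ≤ (8 * T)⁻¹ * √N + ((8 * T) ^ ((1 : ℝ) / 2))⁻¹ * √G) :
    a ≤ N / (32 * T ^ 2) + G / (4 * T) := by
  calc a = √a ^ 2 := (sq_sqrt ha).symm
    _ ≤ ((8 * T)⁻¹ * √N + ((8 * T) ^ ((1 : ℝ) / 2))⁻¹ * √G) ^ 2 := by gcongr
    _ ≤ 2 * (((8 * T)⁻¹ * √N) ^ 2 + (((8 * T) ^ ((1 : ℝ) / 2))⁻¹ * √G) ^ 2) := add_sq_le
    _ = N / (32 * T ^ 2) + G / (4 * T) := by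
      rw [← sqrt_eq_rpow, mul_pow, mul_pow, inv_pow √(8 * T), sq_sqrt hN, sq_sqrt hG,
        sq_sqrt (by positivity)]
      field_simp
      ring

lemma pdg_congr {g₁ g₂ : EuclideanSpace ℝ (Fin d) → ℝ} (h : g₁ =ᶠ[𝓝 x] g₂) (i : Fin d) :
    pdg i g₁ =ᶠ[𝓝 x] pdg i g₂ :=
  (h.fderiv (𝕜 := ℝ)).mono fun _ hy => congrArg (· (EuclideanSpace.single i 1)) hy

lemma bheat_congr {g₁ g₂ : ℝ → EuclideanSpace ℝ (Fin d) → ℝ}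
    (h : (fun z : Spacetime d => g₁ z.1 z.2) =ᶠ[𝓝 (t, x)] fun z => g₂ z.1 z.2) :
    bheat g₁ t x = bheat g₂ t x := by
  have htime : (fun s => g₁ s x) =ᶠ[𝓝 t] fun s => g₂ s x :=
    (Continuous.prodMk_left x).continuousAt.eventually h
  have hspace : g₁ t =ᶠ[𝓝 x] g₂ t := (Continuous.prodMk_right t).continuousAt.eventually h
  exact congrArg₂ (· + ·) htime.deriv_eq <|
    Finset.sum_congr rfl fun i _ => (pdg_congr (pdg_congr hspace i) i).eq_of_nhds

lemma sum_pdg_sq_eq_sumGradSq {u : ℝ → EuclideanSpace ℝ (Fin d) → EuclideanSpace ℝ κ}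
    {F : Spacetime d → EuclideanSpace ℝ κ} (hF : Differentiable ℝ F)
    (h : F =ᶠ[𝓝 (t, x)] fun z => u z.1 z.2) :
    ∑ i, ∑ k, pdg i (fun y => u t y k) x ^ 2 = sumGradSq (fun k z => F z k) (t, x) := by
  have hslice : (fun y => F (t, y)) =ᶠ[𝓝 x] u t :=
    (Continuous.prodMk_right t).continuousAt.eventually h
  rw [Finset.sum_comm]
  refine Finset.sum_congr rfl fun k _ => Finset.sum_congr rfl fun i _ => ?_
  have hcomponent : Differentiable ℝ fun z => F z k := by fun_prop
  have hpdg : pdg i (fun y => F (t, y) k) x = pdg i (fun y => u t y k) x :=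
    (pdg_congr (hslice.fun_comp (· k)) i).eq_of_nhds
  rw [← hpdg, pdg_slice (hcomponent (t, x))]

lemma sum_bheat_sq_eq_sum_heatOp_sq {u : ℝ → EuclideanSpace ℝ (Fin d) → EuclideanSpace ℝ κ}
    {F : Spacetime d → EuclideanSpace ℝ κ} (hF : ContDiff ℝ 2 F)
    (h : F =ᶠ[𝓝 (t, x)] fun z => u z.1 z.2) :
    ∑ k, bheat (fun s y => u s y k) t x ^ 2 = ∑ k, heatOp (fun z => F z k) (t, x) ^ 2 := by
  refine Finset.sum_congr rfl fun k _ => ?_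
  have hcomponent : ContDiff ℝ 2 fun z => F z k := by fun_prop
  have hbheat : bheat (fun s y => F (s, y) k) t x = bheat (fun s y => u s y k) t x :=
    bheat_congr (h.fun_comp (· k))
  rw [← hbheat, bheat_eq_heatOp hcomponent]

lemma norm_sq_eq_sumSq {u : ℝ → EuclideanSpace ℝ (Fin d) → EuclideanSpace ℝ κ}
    {F : Spacetime d → EuclideanSpace ℝ κ} (h : F =ᶠ[𝓝 (t, x)] fun z => u z.1 z.2) :
    ‖u t x‖ ^ 2 = sumSq (fun k z => F z k) (t, x) := by
  rw [EuclideanSpace.real_norm_sq_eq, sumSq, h.eq_of_nhds]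

lemma heatOpBound_of_sqrt_le {u : ℝ → EuclideanSpace ℝ (Fin d) → EuclideanSpace ℝ κ}
    {F : Spacetime d → EuclideanSpace ℝ κ} (hT : 0 < T) (hF : ContDiff ℝ 2 F)
    (h : F =ᶠ[𝓝 (t, x)] fun z => u z.1 z.2)
    (hL : √(∑ k, (bheat (fun s y => u s y k) t x) ^ 2) ≤ (8 * T)⁻¹ * ‖u t x‖
      + ((8 * T) ^ ((1 : ℝ) / 2))⁻¹ * √(∑ i, ∑ k, (pdg i (fun y => u t y k) x) ^ 2)) :
    HeatOpBound T (fun k z => F z k) (t, x) := by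
  rw [← sqrt_sq (norm_nonneg (u t x)), norm_sq_eq_sumSq h, sum_bheat_sq_eq_sum_heatOp_sq hF h,
    sum_pdg_sq_eq_sumGradSq (hF.differentiable two_ne_zero) h] at hL
  exact le_of_sqrt_le_add_sqrt hT (Finset.sum_nonneg fun _ _ => sq_nonneg _) sumSq_nonneg
    sumGradSq_nonneg hL

lemma setIntegral_setIntegral_eq_of_eqOn {K : Set (EuclideanSpace ℝ (Fin d))} {s : Set ℝ}
    {g : ℝ → EuclideanSpace ℝ (Fin d) → ℝ} {f : Spacetime d → ℝ} (hs : MeasurableSet s)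
    (hK : MeasurableSet K) (hf : IntegrableOn f (s ×ˢ K))
    (h : ∀ t ∈ s, ∀ x ∈ K, g t x = f (t, x)) :
    ∫ t in s, ∫ x in K, g t x = ∫ z in s ×ˢ K, f z := by
  rw [Measure.volume_eq_prod] at hf ⊢
  rw [setIntegral_prod _ hf]
  exact setIntegral_congr_fun hs fun t ht => setIntegral_congr_fun hK fun x hx => h t ht x hx

theorem statement17_general (d m : ℕ) :
    ∃ C₀ C : ℝ, 1 ≤ C₀ ∧ 1 ≤ C ∧
      ∀ (T ρ : ℝ) (u : ℝ → EuclideanSpace ℝ (Fin d) → EuclideanSpace ℝ (Fin m)),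
        0 < T → 0 < ρ → 4000 * T ≤ ρ ^ 2 →
        (∃ U : Set (ℝ × EuclideanSpace ℝ (Fin d)), IsOpen U ∧
          {z : ℝ × EuclideanSpace ℝ (Fin d) | z.1 ∈ Icc 0 T ∧ ‖z.2‖ ≤ ρ} ⊆ U ∧
          ContDiffOn ℝ 2 (fun z : ℝ × EuclideanSpace ℝ (Fin d) => u z.1 z.2) U) →
        (∀ t ∈ Icc (0 : ℝ) T, ∀ x, ‖x‖ ≤ ρ →
          √(∑ k, (bheat (fun s y => u s y k) t x) ^ 2)
            ≤ (C₀ * T)⁻¹ * ‖u t x‖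
              + ((C₀ * T) ^ ((1 : ℝ) / 2))⁻¹ *
                  √(∑ i, ∑ k, (pdg i (fun y => u t y k) x) ^ 2)) →
        ∀ t₁ t₀ : ℝ, 0 < t₁ → t₁ ≤ t₀ → t₀ ≤ T / 1000 →
          (∫ t in Icc t₀ (2 * t₀), ∫ x in {x : EuclideanSpace ℝ (Fin d) | ‖x‖ ≤ ρ / 2},
              (T⁻¹ * ‖u t x‖ ^ 2 + ∑ i, ∑ k, (pdg i (fun y => u t y k) x) ^ 2)
                * exp (-‖x‖ ^ 2 / (4 * t)))
            ≤ C * (exp (-ρ ^ 2 / (500 * t₀)) *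
                  (∫ t in Icc (0 : ℝ) T, ∫ x in {x : EuclideanSpace ℝ (Fin d) | ‖x‖ ≤ ρ},
                    (T⁻¹ * ‖u t x‖ ^ 2 + ∑ i, ∑ k, (pdg i (fun y => u t y k) x) ^ 2))
                + t₀ ^ ((d : ℝ) / 2) * (exp 1 * t₀ / t₁) ^ (C * ρ ^ 2 / t₀) *
                  (∫ x in {x : EuclideanSpace ℝ (Fin d) | ‖x‖ ≤ ρ},
                    ‖u 0 x‖ ^ 2 * t₁ ^ (-(d : ℝ) / 2) * exp (-‖x‖ ^ 2 / (4 * t₁)))) := by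
  obtain ⟨C, hC, hbound⟩ := exists_setIntegral_box_le d (Fin m)
  refine ⟨8, C, by norm_num, hC, ?_⟩
  rintro T ρ u hT hρ hTρ ⟨U, hU, hKU, hu⟩ hL t₁ t₀ ht₁ ht ht₀
  have hball (r : ℝ) : {x : EuclideanSpace ℝ (Fin d) | ‖x‖ ≤ r} = closedBall 0 r := by
    ext x
    simp
  have hcylinder : {z : Spacetime d | z.1 ∈ Icc 0 T ∧ ‖z.2‖ ≤ ρ} =
      Icc 0 T ×ˢ closedBall 0 ρ := by
    ext z
    simp
  rw [hcylinder] at hKU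
  obtain ⟨F, hF, hFu⟩ := exists_contDiff_eventuallyEq (n := 2)
    (isClosed_Icc.prod isClosed_closedBall) hU hKU hu
  have hF₂ : ∀ k, ContDiff ℝ 2 fun z => F z k := fun k => by fun_prop
  have hF₁ : ∀ k, ContDiff ℝ 1 fun z => F z k := fun k => (hF₂ k).of_le one_le_two
  have henergy : ∀ t ∈ Icc 0 T, ∀ x ∈ closedBall 0 ρ,
      T⁻¹ * ‖u t x‖ ^ 2 + ∑ i, ∑ k, pdg i (fun y => u t y k) x ^ 2 =
        energyDensity T (fun k z => F z k) (t, x) := fun t ht x hx => by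
    rw [norm_sq_eq_sumSq (hFu _ ⟨ht, hx⟩),
      sum_pdg_sq_eq_sumGradSq (hF.differentiable two_ne_zero) (hFu _ ⟨ht, hx⟩), energyDensity]
  rw [hball, hball, setIntegral_setIntegral_eq_of_eqOn measurableSet_Icc measurableSet_closedBall
      (integrableOn_energyDensity hF₁ (isCompact_closedBall 0 ρ)) henergy,
    setIntegral_setIntegral_eq_of_eqOn measurableSet_Icc measurableSet_closedBall
      (integrableOn_energyDensity_mul_exp hF₁ (isCompact_closedBall 0 (ρ / 2)) (ht₁.trans_le ht))
      fun t ht x hx => ?_,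
    setIntegral_congr_fun measurableSet_closedBall fun x hx => ?_]
  · exact hbound T ρ t₁ t₀ _ hρ hTρ ht₁ ht ht₀ hF₂ fun z hz => heatOpBound_of_sqrt_le hT hF
      (hFu z hz) (hL z.1 hz.1 z.2 (mem_closedBall_zero_iff.1 hz.2))
  · rw [norm_sq_eq_sumSq (hFu (0, x) ⟨⟨le_rfl, hT.le⟩, hx⟩)]
  · have htT : t ∈ Icc 0 T := ⟨by linarith [ht.1], by linarith [ht.2]⟩
    rw [henergy t htT x (closedBall_subset_closedBall (by linarith) hx)]

end Cylinder

/-- Unique continuation Carleman inequality in a cylinder. -/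
theorem statement17 :
    ∃ C₀ C : ℝ, 1 ≤ C₀ ∧ 1 ≤ C ∧
      ∀ (T ρ : ℝ) (u : ℝ → E3 → E3),
        0 < T → 0 < ρ → 4000 * T ≤ ρ ^ 2 →
        (∃ U : Set (ℝ × E3), IsOpen U ∧
          {z : ℝ × E3 | z.1 ∈ Icc 0 T ∧ ‖z.2‖ ≤ ρ} ⊆ U ∧
          ContDiffOn ℝ (⊤ : ℕ∞) (fun z : ℝ × E3 => u z.1 z.2) U) →
        (∀ t ∈ Icc (0:ℝ) T, ∀ x : E3, ‖x‖ ≤ ρ →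
          Real.sqrt (∑ k, (bheat (fun s y => u s y k) t x) ^ 2)
            ≤ (C₀ * T)⁻¹ * ‖u t x‖
              + ((C₀ * T) ^ ((1:ℝ)/2))⁻¹ *
                  Real.sqrt (∑ i, ∑ k, (pdg i (fun y => u t y k) x) ^ 2)) →
        ∀ t₁ t₀ : ℝ, 0 < t₁ → t₁ ≤ t₀ → t₀ ≤ T / 1000 →
          (∫ t in Icc t₀ (2 * t₀), ∫ x in {x : E3 | ‖x‖ ≤ ρ/2},
              (T⁻¹ * ‖u t x‖ ^ 2 + ∑ i, ∑ k, (pdg i (fun y => u t y k) x) ^ 2)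
                * Real.exp (-‖x‖ ^ 2 / (4 * t)))
            ≤ C * (Real.exp (-ρ ^ 2 / (500 * t₀)) *
                  (∫ t in Icc (0:ℝ) T, ∫ x in {x : E3 | ‖x‖ ≤ ρ},
                    (T⁻¹ * ‖u t x‖ ^ 2 + ∑ i, ∑ k, (pdg i (fun y => u t y k) x) ^ 2))
                + t₀ ^ ((3:ℝ)/2) * (Real.exp 1 * t₀ / t₁) ^ (C * ρ ^ 2 / t₀) *
                  (∫ x in {x : E3 | ‖x‖ ≤ ρ},
                    ‖u 0 x‖ ^ 2 * t₁ ^ (-(3:ℝ)/2) * Real.exp (-‖x‖ ^ 2 / (4 * t₁)))) := by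
  obtain ⟨C₀, C, hC₀, hC, h⟩ := statement17_general 3 3
  exact ⟨C₀, C, hC₀, hC, fun T ρ u hT hρ hTρ ⟨U, hU, hKU, hu⟩ => by
    simpa only [Nat.cast_ofNat] using
      h T ρ u hT hρ hTρ ⟨U, hU, hKU, hu.of_le (WithTop.coe_le_coe.2 le_top)⟩⟩
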